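/- For every integer r ≥ 1 one has der(z₂^r) = 3·(z₂^r * z₂) − (r+1)(2r+3)·z₂^{r+1}. -/

import Mathlib

/-!
Write `z₂^r = (xy)^r`. Both products with `z₂` are computed directly:
`z₂^r * z₂ = (r+1) z₂^{r+1} + U` and `z₂^r ⧢ z₂ = (r+1) z₂^{r+1} + 4 T`. Here `U` is the sum of the
words with one `z₄` among `r - 1` letters `z₂`, and `T` is the sum of the words whose exponent tuple
`(c₁, …, c_{2r})` arises from `(1, …, 1)` by raising to `2` one odd-position entry and one later
even-position entry. Hence `der(z₂^r) = 𝒟(4T - U)`, and it remains to show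
`𝒟(U) = U` (`Uf_DropD`) and `𝒟(T) = U - (r+1 choose 2) z₂^{r+1}` (`Tf_DropD`). Then
`der(z₂^r) = 3U - 2r(r+1) z₂^{r+1}`, which is the claim.

The conditions on `A` and `B` in the recursion for `𝔇` only couple neighbouring positions, namely
`{1,2}, {3,4}, …` or `{2,3}, {4,5}, …`. The sums over `A` and `B` therefore factor over these slots
(`slotSum`, `endSum`), and the recursion becomes
`Σ_{even–odd} ± x^n 𝔇 = Σ_{odd–even} ± x^{n-1}y 𝔇 - Σ_{even–odd} ± x^{n-1}y 𝔇` (`DropD_eq`), with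
`𝔇(𝐜)` itself being the term `A = B = ∅` on the left. For tuples consisting mostly of ones, every
slot `(1,1)` is either kept or deleted, so both sides are binomial transforms
`Σ_{S ⊆ [n]} x^{2#S} (⋯)_{n-#S}`. Such a triangular transform is injective (`Bop_vanish`), which
leaves short recurrences: first `𝔇(1, …, 1) = (xy)^r`, then the tuples with a single entry `2` or
`3` (`DropD_odd`, `DropD_even`), and finally the sum over the tuples of `T`, which is not
computed term by term but through a recurrence for the whole sum (`Tf_DropD_succ`).
-/

open scoped Classical BigOperators

noncomputable section

/-- The underlying space of `𝔥¹ = ℚ⟨z₁, z₂, …⟩`: formal ℚ-linear combinations of words,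
a word being encoded by the list of subscripts `[k₁, …, k_r]` of `z_{k₁} ⋯ z_{k_r}`. -/
abbrev H : Type := List ℕ →₀ ℚ

/-- The space of ℚ-linear combinations of words in the two letters `x` (= `false`)
and `y` (= `true`). -/
abbrev Bw : Type := List Bool →₀ ℚ

/-- The word `z_{k₁} ⋯ z_{k_r}` as an element of `H`. -/
def zw (l : List ℕ) : H := Finsupp.single l 1

/-- Membership in `𝔥¹` (all subscripts ≥ 1). -/
def isH1 (w : H) : Prop := ∀ l ∈ w.support, ∀ k ∈ l, 1 ≤ k

/-- Membership in `𝔥^{≥2}` (all subscripts ≥ 2). -/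
def isH2 (w : H) : Prop := ∀ l ∈ w.support, ∀ k ∈ l, 2 ≤ k

/-- Membership in `𝔥⁰` (first subscript ≥ 2, all others ≥ 1). -/
def isH0 (w : H) : Prop :=
  ∀ l ∈ w.support, (∀ k ∈ l, 1 ≤ k) ∧ ∀ k, l.head? = some k → 2 ≤ k

/-- The harmonic product on words. -/
def hmulW : List ℕ → List ℕ → H
  | [], v => Finsupp.single v 1
  | k :: u, [] => Finsupp.single (k :: u) 1
  | k :: u, l :: v =>
      Finsupp.mapDomain (k :: ·) (hmulW u (l :: v)) +
      Finsupp.mapDomain (l :: ·) (hmulW (k :: u) v) +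
      Finsupp.mapDomain ((k + l) :: ·) (hmulW u v)
  termination_by u v => u.length + v.length

/-- The harmonic product `*` on `𝔥¹`. -/
def hmul (u v : H) : H := u.sum fun a ca => v.sum fun b cb => (ca * cb) • hmulW a b

/-- The shuffle product on words in the letters `x, y`. -/
def shW : List Bool → List Bool → Bw
  | [], v => Finsupp.single v 1
  | a :: u, [] => Finsupp.single (a :: u) 1
  | a :: u, b :: v =>
      Finsupp.mapDomain (a :: ·) (shW u (b :: v)) +
      Finsupp.mapDomain (b :: ·) (shW (a :: u) v)
  termination_by u v => u.length + v.length

/-- The identification `z_k = x^{k-1} y`. -/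
def toXY (l : List ℕ) : List Bool :=
  (l.map fun k => List.replicate (k - 1) false ++ [true]).flatten

def fromXYAux : List Bool → ℕ → List ℕ
  | [], _ => []
  | false :: t, c => fromXYAux t (c + 1)
  | true :: t, c => (c + 1) :: fromXYAux t 0

/-- Parse a word in `x, y` (ending in `y`) back into a word `z_{k₁} ⋯ z_{k_r}`. -/
def fromXY (l : List Bool) : List ℕ := fromXYAux l 0

def shmulW (a b : List ℕ) : H := Finsupp.mapDomain fromXY (shW (toXY a) (toXY b))

/-- The shuffle product `⧢` on `𝔥¹` (via the identification `z_k = x^{k-1}y`). -/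
def shmul (u v : H) : H := u.sum fun a ca => v.sum fun b cb => (ca * cb) • shmulW a b

/-- `φ(w) = w * z₂ − w ⧢ z₂`. -/
def phi (w : H) : H := hmul w (zw [2]) - shmul w (zw [2])

/-- `R(u,v) = φ(u*v) − φ(u)*v − u*φ(v)`. -/
def Rop (u v : H) : H := phi (hmul u v) - hmul (phi u) v - hmul u (phi v)

/-- The weight operator `W`. -/
def Wop (w : H) : H := w.sum fun a c => Finsupp.single a (c * (a.sum : ℚ))

/-- `Σ_{w = u'(p)u''} u' y u''`: replace one occurrence of the factor `p` by `y`. -/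
def replaceOcc (p : List Bool) : List Bool → Bw
  | [] => 0
  | a :: t =>
      (if p.isPrefixOf (a :: t) then Finsupp.single (true :: (a :: t).drop p.length) 1 else 0) +
      Finsupp.mapDomain (a :: ·) (replaceOcc p t)

/-- The map `δ` on words in the letters `x, y`. -/
def deltaB (l : List Bool) : Bw :=
  (if l.take 2 = [true, false] then (1/2 : ℚ) • Finsupp.single (l.drop 2) 1 else 0) -
  (if l.take 2 = [false, true] then (1/2 : ℚ) • Finsupp.single (l.drop 2) 1 else 0) +
  (if l.take 2 = [true, true] then (1/4 : ℚ) • Finsupp.single (l.drop 2) 1 else 0) +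
  (1/2 : ℚ) • (replaceOcc [true, true, false] l - replaceOcc [false, true, true] l)

/-- The map `δ : 𝔥¹ → 𝔥¹`. -/
def deltaH (w : H) : H := w.sum fun a c => c • Finsupp.mapDomain fromXY (deltaB (toXY a))

/-- The recursively defined map `𝔇` on tuples, with an explicit fuel parameter.
(The fuel `c.sum + 1` is always sufficient, since the total sum of the entries strictly
decreases in each recursive call.) -/
def Dfuel : ℕ → List ℕ → Bw
  | _, [] => Finsupp.single [] 1
  | 0, _ :: _ => 0
  | fuel + 1, k :: t =>
      let c := k :: t
      let n := c.length
      let ones : Finset ℕ := (Finset.Icc 1 n).filter fun i => c.getD (i - 1) 0 = 1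
      let bigs : Finset ℕ := (Finset.Icc 1 n).filter fun i => 1 < c.getD (i - 1) 0
      let evenOdd : Finset ℕ → Prop := fun A =>
        ∀ i ∈ A, (Even i → i + 1 ∈ A) ∧ (Odd i → i - 1 ∈ A)
      let oddEven : Finset ℕ → Prop := fun A =>
        ∀ i ∈ A, (Odd i → i + 1 ∈ A) ∧ (Even i → i - 1 ∈ A)
      let noEvenPair : Finset ℕ → Prop := fun B' =>
        ∀ l : ℕ, 1 ≤ l → ¬(2 * l ∈ B' ∧ 2 * l + 1 ∈ B')
      let noOddPair : Finset ℕ → Prop := fun B' =>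
        ∀ l : ℕ, 1 ≤ l → ¬(2 * l - 1 ∈ B' ∧ 2 * l ∈ B')
      let newc : Finset ℕ → Finset ℕ → List ℕ := fun A B' =>
        (List.range n).filterMap fun j =>
          if j + 1 ∈ A then none
          else some (c.getD j 0 - if j + 1 ∈ B' then 1 else 0)
      (∑ A ∈ ones.powerset.filter evenOdd,
        ∑ B' ∈ bigs.powerset.filter (fun B' => 1 ≤ A.card + B'.card ∧ noEvenPair B'),
          ((-1 : ℚ) ^ (B'.card + 1)) •
            Finsupp.mapDomain (fun w => List.replicate (A.card + B'.card) false ++ w)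
              (Dfuel fuel (newc A B'))) +
      (∑ A ∈ ones.powerset.filter evenOdd,
        ∑ B' ∈ bigs.powerset.filter (fun B' => 2 ≤ A.card + B'.card ∧ noEvenPair B'),
          ((-1 : ℚ) ^ (B'.card + 1)) •
            Finsupp.mapDomain
              (fun w => List.replicate (A.card + B'.card - 1) false ++ true :: w)
              (Dfuel fuel (newc A B'))) +
      (∑ A ∈ ones.powerset.filter oddEven,
        ∑ B' ∈ bigs.powerset.filter (fun B' => 2 ≤ A.card + B'.card ∧ noOddPair B'),
          ((-1 : ℚ) ^ B'.card) •
            Finsupp.mapDomain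
              (fun w => List.replicate (A.card + B'.card - 1) false ++ true :: w)
              (Dfuel fuel (newc A B')))

/-- The map `𝔇` on tuples of positive integers. -/
def DropD (c : List ℕ) : Bw := Dfuel (c.sum + 1) c

/-- Run-length encoding of a word in `x, y`: the exponents `(c₁, …, c_{2s})` of
`x^{c₁} y^{c₂} ⋯ x^{c_{2s-1}} y^{c_{2s}}`. -/
def rle : List Bool → List ℕ
  | [] => []
  | a :: t => ((t.takeWhile (· = a)).length + 1) :: rle (t.dropWhile (· = a))
  termination_by l => l.length
  decreasing_by
    simp only [List.length_cons]
    exact Nat.lt_succ_of_le (List.Sublist.length_le (List.dropWhile_sublist _))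

def Drop1W (a : List ℕ) : H := Finsupp.mapDomain fromXY (DropD (rle (toXY a)))

/-- The Drop1 operator `𝒟 : 𝔥⁰ → 𝔥^{≥2}` of Hirose–Maesaka–Seki–Watanabe. -/
def Drop1 (w : H) : H := w.sum fun a c => c • Drop1W a

/-- The map `der = −𝒟 ∘ φ`, i.e. `der(w) = 𝒟(w ⧢ z₂ − w * z₂)`. -/
def der (w : H) : H := Drop1 (shmul w (zw [2]) - hmul w (zw [2]))

/-- The ideal `DR_*` of `(𝔥^{≥2}, *)` spanned by the `der^n(R(u,v)) * w`. -/
def DRstar : Submodule ℚ H :=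
  Submodule.span ℚ {x | ∃ (n : ℕ) (u v w : H), isH2 u ∧ isH2 v ∧ isH2 w ∧
    x = hmul (der^[n] (Rop u v)) w}

/-- The lexicographic order `≻` on the lattice `ℤτ + ℤ`. -/
def lexGT (a b : ℤ × ℤ) : Prop := b.1 < a.1 ∨ (a.1 = b.1 ∧ b.2 < a.2)

/-- The lattice point `mτ + n`. -/
def lat (τ : ℂ) (p : ℤ × ℤ) : ℂ := p.1 * τ + p.2

/-- The finite partial sum `S_{M,N}(k₁,…,k_r; τ)` of the multiple Eisenstein series. -/
def SMN (k : List ℕ) (M N : ℕ) (τ : ℂ) : ℂ :=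
  ∑ f ∈ (Fintype.piFinset fun _ : Fin k.length =>
      (Finset.Ioo (-(M : ℤ)) (M : ℤ)) ×ˢ (Finset.Ioo (-(N : ℤ)) (N : ℤ))).filter
      (fun f => ∀ i : Fin k.length,
        lexGT (f i) (if h : (i : ℕ) + 1 < k.length then f ⟨(i : ℕ) + 1, h⟩ else (0, 0))),
    ∏ i : Fin k.length, (lat τ (f i)) ^ (-(k.get i : ℤ))

/-- The finite partial sums of the `g`-part: only lattice points with positive
imaginary part. -/
def gSMN (k : List ℕ) (M N : ℕ) (τ : ℂ) : ℂ :=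
  ∑ f ∈ (Fintype.piFinset fun _ : Fin k.length =>
      (Finset.Ioo (-(M : ℤ)) (M : ℤ)) ×ˢ (Finset.Ioo (-(N : ℤ)) (N : ℤ))).filter
      (fun f => (∀ i : Fin k.length,
        lexGT (f i) (if h : (i : ℕ) + 1 < k.length then f ⟨(i : ℕ) + 1, h⟩ else (0, 0))) ∧
        ∀ i : Fin k.length, 0 < (lat τ (f i)).im),
    ∏ i : Fin k.length, (lat τ (f i)) ^ (-(k.get i : ℤ))

/-- The multiple zeta value `ζ(k₁,…,k_r)` as an (unconditional) sum. -/
def zetaValue (k : List ℕ) : ℂ :=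
  ∑' n : Fin k.length → ℕ,
    if ∀ i : Fin k.length,
        (if h : (i : ℕ) + 1 < k.length then n ⟨(i : ℕ) + 1, h⟩ else 0) < n i then
      ∏ i : Fin k.length, (n i : ℂ) ^ (-(k.get i : ℤ))
    else 0

section Quasi

variable {R : Type*} [CommRing R] [Algebra ℚ R]

/-- `F_w(M) = Σ_{w = w₁⋯w_s} Σ_{M > m₁ > ⋯ > m_s > 0} f_{w₁}(m₁)⋯f_{w_s}(m_s)` on words. -/
def Fword (f : ℕ → H →ₗ[ℚ] R) (M : ℕ) (l : List ℕ) : R :=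
  if l = [] then 1
  else ∑ c : Composition l.length,
    ∑ m ∈ (Fintype.piFinset fun _ : Fin c.length => Finset.Ioo 0 M).filter
        (fun m => StrictAnti m),
      ∏ i : Fin c.length, f (m i) (zw ((l.splitWrtComposition c).getD (i : ℕ) []))

/-- The ℚ-linear extension of `Fword`. -/
def FL (f : ℕ → H →ₗ[ℚ] R) (M : ℕ) (w : H) : R := w.sum fun l c => c • Fword f M l

/-- `μ^{m₁,…,m_r} = 1/(r₁!⋯r_s!)` where `r₁,…,r_s` are the multiplicities of the
distinct values of `m`. -/
def muCoeff {s : ℕ} (m : Fin s → ℕ) : ℚ :=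
  (∏ v ∈ Finset.image m Finset.univ,
    ((Finset.univ.filter fun i => m i = v).card.factorial : ℚ))⁻¹

/-- `coF(M)` on words: supported on powers of `z₁`. -/
def coFword (a : ℕ → R) (M : ℕ) (l : List ℕ) : R :=
  if ∀ k ∈ l, k = 1 then
    (-1 : R) ^ l.length *
      ∑ m ∈ (Fintype.piFinset fun _ : Fin l.length => Finset.Ioo 0 M).filter
          (fun m => Antitone m),
        muCoeff m • ∏ i : Fin l.length, a (m i)
  else 0

/-- The ℚ-linear extension of `coFword`. -/
def coFL (a : ℕ → R) (M : ℕ) (w : H) : R := w.sum fun l c => c • coFword a M l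

/-- `F^*(M)`: the deconcatenation convolution of `coF(M)` and `F(M)` on words. -/
def FstarWord (f : ℕ → H →ₗ[ℚ] R) (M : ℕ) (l : List ℕ) : R :=
  ∑ i ∈ Finset.range (l.length + 1),
    coFword (fun m => f m (zw [1])) M (l.take i) * Fword f M (l.drop i)

/-- The ℚ-linear extension of `FstarWord`. -/
def FstarL (f : ℕ → H →ₗ[ℚ] R) (M : ℕ) (w : H) : R := w.sum fun l c => c • FstarWord f M l

end Quasi

/-- Parse a word `b_{k₁}b₀^{m₁} ⋯ b_{k_r}b₀^{m_r}` (a list over ℕ, with `0` playing the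
role of `b₀`) into the list of pairs `(k₁,m₁), …, (k_r,m_r)`. -/
def toPairs : List ℕ → List (ℕ × ℕ)
  | [] => []
  | k :: t => (k, (t.takeWhile (· = 0)).length) :: toPairs (t.dropWhile (· = 0))
  termination_by l => l.length
  decreasing_by
    simp only [List.length_cons]
    exact Nat.lt_succ_of_le (List.Sublist.length_le (List.dropWhile_sublist _))

def ofPairs (P : List (ℕ × ℕ)) : List ℕ :=
  (P.map fun p => p.1 :: List.replicate p.2 0).flatten

/-- The involution `τ_b` on words of `ℚ⟨ℬ⟩⁰`. -/
def taubW (l : List ℕ) : List ℕ :=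
  ofPairs (((toPairs l).map fun p => (p.2 + 1, p.1 - 1)).reverse)

/-- The ℚ-linear involution `τ_b` on `ℚ⟨ℬ⟩⁰`. -/
def taub (w : H) : H := w.sum fun a c => c • (Finsupp.single (taubW a) 1 : H)

/-- The balanced harmonic product `*_b` on words of `ℚ⟨ℬ⟩⁰`. -/
def hbW : List ℕ → List ℕ → H
  | [], v => Finsupp.single v 1
  | i :: u, [] => Finsupp.single (i :: u) 1
  | i :: u, j :: v =>
      Finsupp.mapDomain (i :: ·) (hbW u (j :: v)) +
      Finsupp.mapDomain (j :: ·) (hbW (i :: u) v) +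
      (if i ≠ 0 ∧ j ≠ 0 then Finsupp.mapDomain ((i + j) :: ·) (hbW u v) else 0)
  termination_by u v => u.length + v.length

/-- The balanced harmonic product `*_b`. -/
def hb (u v : H) : H := u.sum fun a ca => v.sum fun b cb => (ca * cb) • hbW a b

/-- The derivation `D` of `ℚ⟨ℬ⟩⁰`:
`D(b_{k₁}b₀^{m₁}⋯b_{k_r}b₀^{m_r}) = Σ_{1≤i≤j≤r} k_i(m_j+1)·(word with k_i, m_j increased)`. -/
def Dbal (w : H) : H :=
  w.sum fun a c =>
    let P := toPairs a
    ∑ i ∈ Finset.range P.length, ∑ j ∈ Finset.Ico i P.length,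
      (c * (P.getD i (0, 0)).1 * ((P.getD j (0, 0)).2 + 1)) •
        (Finsupp.single (ofPairs (P.mapIdx fun t p =>
          ((if t = i then p.1 + 1 else p.1), (if t = j then p.2 + 1 else p.2)))) 1 : H)

/-! ### Positions in a tuple -/

variable {M : Type*} [AddCommGroup M]

/-- The positions (counted from `o + 1`) of the entries of the tuple satisfying `p`. -/
def posOf (p : ℕ → Prop) : ℕ → List ℕ → Finset ℕ
  | _, [] => ∅
  | o, m :: c => if p m then insert (o + 1) (posOf p (o + 1) c) else posOf p (o + 1) c

theorem lt_of_mem_posOf {p : ℕ → Prop} {o i : ℕ} {c : List ℕ} (h : i ∈ posOf p o c) : o < i := by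
  induction c generalizing o with
  | nil => simp [posOf] at h
  | cons m c ih =>
    rw [posOf] at h
    split_ifs at h with hm
    · rcases Finset.mem_insert.1 h with rfl | h
      · omega
      · have := ih h; omega
    · have := ih h; omega

theorem filter_eq_posOf (p : ℕ → Prop) (o : ℕ) (c : List ℕ) :
    ((Finset.Icc (o + 1) (o + c.length)).filter fun i => p (c.getD (i - 1 - o) 0)) =
      posOf p o c := by
  induction c generalizing o with
  | nil => simp [posOf]
  | cons m c ih =>
    have hI : Finset.Icc (o + 1) (o + (m :: c).length) =
        insert (o + 1) (Finset.Icc (o + 1 + 1) (o + 1 + c.length)) := by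
      ext i; simp only [Finset.mem_insert, Finset.mem_Icc, List.length_cons]; omega
    have hT : ((Finset.Icc (o + 1 + 1) (o + 1 + c.length)).filter
        fun i => p ((m :: c).getD (i - 1 - o) 0)) = posOf p (o + 1) c := by
      rw [← ih (o + 1)]
      refine Finset.filter_congr fun i hi => ?_
      have hi' := (Finset.mem_Icc.1 hi).1
      obtain ⟨d, rfl⟩ : ∃ d, i = o + 2 + d := ⟨i - (o + 2), by omega⟩
      rw [show o + 2 + d - 1 - o = d + 1 by omega, show o + 2 + d - 1 - (o + 1) = d by omega]
      simp
    rw [hI, Finset.filter_insert, hT, posOf]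
    simp

theorem sum_powerset_posOf_cons (p : ℕ → Prop) (o m : ℕ) (c : List ℕ) (f : Finset ℕ → M) :
    ∑ A ∈ (posOf p o (m :: c)).powerset, f A =
      ∑ A ∈ (posOf p (o + 1) c).powerset, (f A + if p m then f (insert (o + 1) A) else 0) := by
  rw [posOf, Finset.sum_add_distrib]
  split_ifs with hm
  · rw [Finset.sum_powerset_insert]
    intro h
    have := lt_of_mem_posOf h
    omega
  · simp

/-- `𝐜_{(−A)} − δ_B` with positions counted from `o + 1`. -/
def dropDec (A B : Finset ℕ) : ℕ → List ℕ → List ℕ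
  | _, [] => []
  | o, m :: c =>
      if o + 1 ∈ A then dropDec A B (o + 1) c
      else (m - if o + 1 ∈ B then 1 else 0) :: dropDec A B (o + 1) c

theorem filterMap_eq_dropDec (A B : Finset ℕ) (o : ℕ) (c : List ℕ) :
    ((List.range c.length).filterMap fun j =>
      if o + j + 1 ∈ A then none
      else some (c.getD j 0 - if o + j + 1 ∈ B then 1 else 0)) = dropDec A B o c := by
  induction c generalizing o with
  | nil => simp [dropDec]
  | cons m c ih =>
    rw [List.length_cons, List.range_succ_eq_map, dropDec, ← ih (o + 1), List.filterMap_cons,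
      List.filterMap_map]
    have : ((fun j => if o + j + 1 ∈ A then none
        else some ((m :: c).getD j 0 - if o + j + 1 ∈ B then 1 else 0)) ∘ Nat.succ) =
        fun j => if o + 1 + j + 1 ∈ A then none
        else some (c.getD j 0 - if o + 1 + j + 1 ∈ B then 1 else 0) := by
      funext j
      simp [show o + (j + 1) + 1 = o + 1 + j + 1 by omega]
    rw [this]
    simp only [add_zero]
    by_cases h : o + 1 ∈ A <;> simp [h]

theorem dropDec_congr {A A' B B' : Finset ℕ} {o : ℕ} {c : List ℕ}
    (hA : ∀ i, o < i → (i ∈ A ↔ i ∈ A')) (hB : ∀ i, o < i → (i ∈ B ↔ i ∈ B')) :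
    dropDec A B o c = dropDec A' B' o c := by
  induction c generalizing o with
  | nil => simp [dropDec]
  | cons m c ih =>
    simp only [dropDec, hA (o + 1) (by omega), hB (o + 1) (by omega)]
    rw [ih (fun i hi => hA i (by omega)) (fun i hi => hB i (by omega))]

/-! ### Slot decomposition of the sums over subsets -/

/-- `A` is a union of pairs of neighbouring positions `{i, i + 1}` with `i + s` odd: the condition
“odd–even” for `s = 0`, “even–odd” for `s = 1`. -/
def PairA (s : ℕ) (A : Finset ℕ) : Prop :=
  ∀ i ∈ A, (Odd (i + s) → i + 1 ∈ A) ∧ (Even (i + s) → i - 1 ∈ A)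

/-- `B` contains none of the pairs `{i, i + 1}` with `i + s` odd: `{2l−1, 2l} ⊄ B` for `s = 0`,
`{2l, 2l+1} ⊄ B` for `s = 1`. -/
def PairB (s : ℕ) (B : Finset ℕ) : Prop := ∀ i, Odd (i + s) → ¬(i ∈ B ∧ i + 1 ∈ B)

/-- `Σ (−1)^{#B} K (#A + #B) (𝐜_{(−A)} − δ_B)` over the odd–even `A` and the `B` with
`{2l−1, 2l} ⊄ B`. The entries are grouped into the slots `{1,2}, {3,4}, …` and the choices in
different slots are independent: leave a slot `(m, l)` alone, delete it if `m = l = 1`, or lower one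
of its entries if that entry is `> 1`. -/
def slotSum : List ℕ → (ℕ → List ℕ → M) → M
  | [], K => K 0 []
  | [m], K => K 0 [m] - if 1 < m then K 1 [m - 1] else 0
  | m :: l :: c, K =>
      slotSum c (fun n c' => K n (m :: l :: c')) +
      (if m = 1 ∧ l = 1 then slotSum c (fun n c' => K (n + 2) c') else 0) -
      (if 1 < m then slotSum c (fun n c' => K (n + 1) ((m - 1) :: l :: c')) else 0) -
      (if 1 < l then slotSum c (fun n c' => K (n + 1) (m :: (l - 1) :: c')) else 0)

/-- The analogue of `slotSum` for even–odd `A` and the `B` with `{2l, 2l+1} ⊄ B`: the first entry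
forms a slot of its own, followed by the slots `{2,3}, {4,5}, …`. -/
def endSum : List ℕ → (ℕ → List ℕ → M) → M
  | [], K => K 0 []
  | m :: c, K => slotSum c (fun n c' => K n (m :: c')) -
      if 1 < m then slotSum c (fun n c' => K (n + 1) ((m - 1) :: c')) else 0

/-- One summand of the sums in the definition of `𝔇`; the positions in `A` and `B` are counted from
`o + 1` on, and `s` selects the parity of the pairing as in `PairA`. -/
def term (s o : ℕ) (c : List ℕ) (K : ℕ → List ℕ → Bw) (A B : Finset ℕ) : Bw :=
  if PairA s A ∧ PairB s B then
    ((-1 : ℚ) ^ B.card) • K (A.card + B.card) (dropDec A B o c) else 0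

/-- The sums over subsets `A`, `B` in the definition of `𝔇`, without the condition on `#A + #B`. -/
def finSum (s o : ℕ) (c : List ℕ) (K : ℕ → List ℕ → Bw) : Bw :=
  ∑ A ∈ (posOf (· = 1) o c).powerset, ∑ B ∈ (posOf (1 < ·) o c).powerset, term s o c K A B

section peel
variable {s o : ℕ} {A B : Finset ℕ}

theorem not_pairA_insert_one (h : Even (o + s)) (hA : ∀ i ∈ A, o + 2 < i) :
    ¬ PairA s (insert (o + 1) A) := by
  intro hP
  have h1 := (hP (o + 1) (by simp)).1 (by
    rw [show o + 1 + s = o + s + 1 by ring]; exact h.add_one)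
  rcases Finset.mem_insert.1 h1 with h1 | h1
  · omega
  · have := hA _ h1; omega

theorem not_pairA_insert_two (h : Even (o + s)) (hA : ∀ i ∈ A, o + 2 < i) :
    ¬ PairA s (insert (o + 2) A) := by
  intro hP
  have h1 := (hP (o + 2) (by simp)).2 (by
    rw [show o + 2 + s = o + s + 2 by ring]; exact h.add (by decide))
  rcases Finset.mem_insert.1 h1 with h1 | h1
  · omega
  · have := hA _ h1; omega

theorem pairA_insert_both (h : Even (o + s)) (hA : ∀ i ∈ A, o + 2 < i) :
    PairA s (insert (o + 1) (insert (o + 2) A)) ↔ PairA s A := by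
  have h1 : Odd (o + 1 + s) := by rw [show o + 1 + s = o + s + 1 by ring]; exact h.add_one
  have h2 : Even (o + 2 + s) := by
    rw [show o + 2 + s = o + s + 2 by ring]; exact h.add (by decide)
  constructor
  · intro hP i hi
    have hi' := hA i hi
    have := hP i (by simp [hi])
    refine ⟨fun ho => ?_, fun he => ?_⟩
    · have := this.1 ho
      simp only [Finset.mem_insert] at this
      rcases this with h | h | h
      · omega
      · omega
      · exact h
    · have := this.2 he
      simp only [Finset.mem_insert] at this
      rcases this with h | h | h
      · omega
      · have : i = o + 3 := by omega
        subst this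
        exfalso
        rw [show o + 3 + s = o + 2 + s + 1 by ring] at he
        exact (Nat.not_even_iff_odd.2 h2.add_one) he
      · exact h
  · intro hP i hi
    simp only [Finset.mem_insert] at hi ⊢
    rcases hi with rfl | rfl | hi
    · exact ⟨fun _ => by simp, fun he => absurd h1 (Nat.not_odd_iff_even.2 he)⟩
    · exact ⟨fun ho => absurd h2 (Nat.not_even_iff_odd.2 ho), fun _ => by simp⟩
    · exact ⟨fun ho => by simp [(hP i hi).1 ho], fun he => by simp [(hP i hi).2 he]⟩

theorem pairB_insert {j : ℕ} (hj : j = o + 1 ∨ j = o + 2) (h : Even (o + s))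
    (hB : ∀ i ∈ B, o + 2 < i) :
    PairB s (insert j B) ↔ PairB s B := by
  have h1 : Odd (o + 1 + s) := by rw [show o + 1 + s = o + s + 1 by ring]; exact h.add_one
  have h2 : Even (o + 2 + s) := by
    rw [show o + 2 + s = o + s + 2 by ring]; exact h.add (by decide)
  constructor
  · intro hP i hi ⟨ha, hb⟩
    exact hP i hi ⟨by simp [ha], by simp [hb]⟩
  · intro hP i hi ⟨ha, hb⟩
    rcases Finset.mem_insert.1 ha with ha | ha <;> rcases Finset.mem_insert.1 hb with hb | hb
    · omega
    · have := hB _ hb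
      have : i = o + 2 := by omega
      subst this
      exact (Nat.not_even_iff_odd.2 hi) h2
    · have := hB _ ha; omega
    · exact hP i hi ⟨ha, hb⟩

theorem not_pairB_insert_both (h : Even (o + s)) :
    ¬ PairB s (insert (o + 1) (insert (o + 2) B)) := by
  intro hP
  refine hP (o + 1) ?_ ⟨by simp, by simp⟩
  rw [show o + 1 + s = o + s + 1 by ring]; exact h.add_one

end peel


section term
variable {s o : ℕ} {A B : Finset ℕ} {c : List ℕ}

theorem term_keep (hA : ∀ i ∈ A, o + 2 < i) (hB : ∀ i ∈ B, o + 2 < i) (m l : ℕ)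
    (K : ℕ → List ℕ → Bw) :
    term s o (m :: l :: c) K A B = term s (o + 2) c (fun n c' => K n (m :: l :: c')) A B := by
  have a1 : o + 1 ∉ A := fun h => by have := hA _ h; omega
  have a2 : o + 2 ∉ A := fun h => by have := hA _ h; omega
  have b1 : o + 1 ∉ B := fun h => by have := hB _ h; omega
  have b2 : o + 2 ∉ B := fun h => by have := hB _ h; omega
  simp [term, dropDec, a1, a2, b1, b2]

theorem term_del_one (h : Even (o + s)) (hA : ∀ i ∈ A, o + 2 < i) (K : ℕ → List ℕ → Bw) :
    term s o c K (insert (o + 1) A) B = 0 := by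
  simp [term, not_pairA_insert_one h hA]

theorem term_del_two (h : Even (o + s)) (hA : ∀ i ∈ A, o + 2 < i) (K : ℕ → List ℕ → Bw) :
    term s o c K (insert (o + 2) A) B = 0 := by
  simp [term, not_pairA_insert_two h hA]

theorem term_del_both (h : Even (o + s)) (hA : ∀ i ∈ A, o + 2 < i) (m l : ℕ)
    (K : ℕ → List ℕ → Bw) :
    term s o (m :: l :: c) K (insert (o + 1) (insert (o + 2) A)) B =
      term s (o + 2) c (fun n c' => K (n + 2) c') A B := by
  have a1 : o + 1 ∉ insert (o + 2) A := fun h => by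
    rcases Finset.mem_insert.1 h with h | h
    · omega
    · have := hA _ h; omega
  have a2 : o + 2 ∉ A := fun h => by have := hA _ h; omega
  have hd : dropDec (insert (o + 1) (insert (o + 2) A)) B o (m :: l :: c) =
      dropDec A B (o + 2) c := by
    simp only [dropDec, Finset.mem_insert, true_or, or_true, if_true]
    exact dropDec_congr (fun i hi => by
      have : i ≠ o + 1 := by omega
      have : i ≠ o + 2 := by omega
      simp [*]) (fun i hi => Iff.rfl)
  simp only [term, pairA_insert_both h hA, hd, Finset.card_insert_of_notMem a1,
    Finset.card_insert_of_notMem a2]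
  rw [show A.card + 1 + 1 + B.card = A.card + B.card + 2 by ring]

theorem term_dec_one (h : Even (o + s)) (hA : ∀ i ∈ A, o + 2 < i) (hB : ∀ i ∈ B, o + 2 < i)
    (m l : ℕ) (K : ℕ → List ℕ → Bw) :
    term s o (m :: l :: c) K A (insert (o + 1) B) =
      - term s (o + 2) c (fun n c' => K (n + 1) ((m - 1) :: l :: c')) A B := by
  have a1 : o + 1 ∉ A := fun h => by have := hA _ h; omega
  have a2 : o + 2 ∉ A := fun h => by have := hA _ h; omega
  have b1 : o + 1 ∉ B := fun h => by have := hB _ h; omega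
  have b2 : o + 2 ∉ B := fun h => by have := hB _ h; omega
  have hd : dropDec A (insert (o + 1) B) o (m :: l :: c) =
      (m - 1) :: l :: dropDec A B (o + 2) c := by
    simp only [dropDec, a1, a2, b2, Finset.mem_insert, true_or, if_true, if_false]
    rw [dropDec_congr (A' := A) (B' := B) (fun i hi => Iff.rfl) (fun i hi => by simp; omega)]
    simp
  simp only [term, pairB_insert (Or.inl rfl) h hB, hd, Finset.card_insert_of_notMem b1]
  split_ifs
  · rw [← add_assoc, pow_succ]; simp
  · simp

theorem term_dec_two (h : Even (o + s)) (hA : ∀ i ∈ A, o + 2 < i) (hB : ∀ i ∈ B, o + 2 < i)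
    (m l : ℕ) (K : ℕ → List ℕ → Bw) :
    term s o (m :: l :: c) K A (insert (o + 2) B) =
      - term s (o + 2) c (fun n c' => K (n + 1) (m :: (l - 1) :: c')) A B := by
  have a1 : o + 1 ∉ A := fun h => by have := hA _ h; omega
  have a2 : o + 2 ∉ A := fun h => by have := hA _ h; omega
  have b1 : o + 1 ∉ B := fun h => by have := hB _ h; omega
  have b2 : o + 2 ∉ B := fun h => by have := hB _ h; omega
  have hd : dropDec A (insert (o + 2) B) o (m :: l :: c) =
      m :: (l - 1) :: dropDec A B (o + 2) c := by
    simp only [dropDec, a1, a2, b1, Finset.mem_insert, if_false]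
    rw [dropDec_congr (A' := A) (B' := B) (fun i hi => Iff.rfl) (fun i hi => by simp; omega)]
    simp
  simp only [term, pairB_insert (Or.inr rfl) h hB, hd, Finset.card_insert_of_notMem b2]
  split_ifs
  · rw [← add_assoc, pow_succ]; simp
  · simp

theorem term_dec_both (h : Even (o + s)) (K : ℕ → List ℕ → Bw) :
    term s o c K A (insert (o + 1) (insert (o + 2) B)) = 0 := by
  simp [term, not_pairB_insert_both h]

end term

/-- The sum over subsets factors over the slots; each step peels off the slot at the positions
`o + 1`, `o + 2`. -/
theorem finSum_eq_slotSum {s : ℕ} : ∀ (c : List ℕ) {o : ℕ} (_ : Even (o + s))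
    (K : ℕ → List ℕ → Bw), finSum s o c K = slotSum c K
  | [], o, h, K => by
    simp [finSum, posOf, slotSum, term, PairA, PairB, dropDec]
  | [m], o, h, K => by
    have hA : ∀ i ∈ (∅ : Finset ℕ), o + 2 < i := by simp
    have h3 : PairA s ∅ := by simp [PairA]
    have h4 : PairB s ∅ := by simp [PairB]
    have h1 : ¬ PairA s {o + 1} := by simpa using not_pairA_insert_one h hA
    have h2 : PairB s {o + 1} := by simpa [h4] using pairB_insert (Or.inl rfl) h hA
    simp only [finSum, sum_powerset_posOf_cons, slotSum]
    simp [posOf, term, h1, h2, h3, h4, dropDec]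
    split_ifs <;> simp [sub_eq_add_neg]
  | m :: l :: c, o, h, K => by
    have h' : Even (o + 2 + s) := by
      rw [show o + 2 + s = o + s + 2 by ring]; exact h.add (by decide)
    simp only [finSum, sum_powerset_posOf_cons, slotSum]
    rw [← finSum_eq_slotSum c h', ← finSum_eq_slotSum c h', ← finSum_eq_slotSum c h',
      ← finSum_eq_slotSum c h']
    have key : ∀ A ∈ (posOf (· = 1) (o + 2) c).powerset,
        ∀ B ∈ (posOf (1 < ·) (o + 2) c).powerset,
        (∀ i ∈ A, o + 2 < i) ∧ (∀ i ∈ B, o + 2 < i) := fun A hA B hB =>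
      ⟨fun i hi => lt_of_mem_posOf (Finset.mem_powerset.1 hA hi),
        fun i hi => lt_of_mem_posOf (Finset.mem_powerset.1 hB hi)⟩
    simp only [finSum]
    rcases (by omega : m = 0 ∨ m = 1 ∨ 1 < m) with rfl | rfl | hm <;>
    rcases (by omega : l = 0 ∨ l = 1 ∨ 1 < l) with rfl | rfl | hl <;>
    (try have hm' : m ≠ 1 := by omega) <;>
    (try have hl' : l ≠ 1 := by omega) <;>
    simp only [*, ite_true, ite_false, lt_irrefl, not_lt_zero, zero_ne_one, and_true, and_false,
      and_self, add_zero, sub_zero, ← Finset.sum_add_distrib,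
      ← Finset.sum_sub_distrib] <;>
    refine Finset.sum_congr rfl fun A hA => ?_ <;>
    refine Finset.sum_congr rfl fun B hB => ?_ <;>
    obtain ⟨hA', hB'⟩ := key A hA B hB <;>
    simp [term_keep hA' hB', term_del_one h hA', term_del_two h hA', term_del_both h hA',
      term_dec_one h hA' hB', term_dec_two h hA' hB', term_dec_both h] <;> abel

theorem term_head {s : ℕ} {A B : Finset ℕ} (hA : ∀ i ∈ A, 1 < i) (hB : ∀ i ∈ B, 1 < i)
    (m : ℕ) (c : List ℕ) (K : ℕ → List ℕ → Bw) :
    term s 0 (m :: c) K A B = term s 1 c (fun n c' => K n (m :: c')) A B := by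
  have a1 : 1 ∉ A := fun h => by have := hA _ h; omega
  have b1 : 1 ∉ B := fun h => by have := hB _ h; omega
  simp [term, dropDec, a1, b1]

theorem term_head_del {A B : Finset ℕ} (hA : ∀ i ∈ A, 1 < i) (c : List ℕ)
    (K : ℕ → List ℕ → Bw) : term 1 0 c K (insert 1 A) B = 0 := by
  have : ¬ PairA 1 (insert 1 A) := by
    intro hP
    have h1 := (hP 1 (by simp)).2 (by decide)
    rcases Finset.mem_insert.1 h1 with h1 | h1
    · omega
    · have := hA _ h1; omega
  simp [term, this]

theorem term_head_dec {A B : Finset ℕ} (hA : ∀ i ∈ A, 1 < i) (hB : ∀ i ∈ B, 1 < i)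
    (m : ℕ) (c : List ℕ) (K : ℕ → List ℕ → Bw) :
    term 1 0 (m :: c) K A (insert 1 B) =
      - term 1 1 c (fun n c' => K (n + 1) ((m - 1) :: c')) A B := by
  have a1 : 1 ∉ A := fun h => by have := hA _ h; omega
  have b1 : 1 ∉ B := fun h => by have := hB _ h; omega
  have hP : PairB 1 (insert 1 B) ↔ PairB 1 B := by
    constructor
    · intro hP i hi ⟨ha, hb⟩
      exact hP i hi ⟨by simp [ha], by simp [hb]⟩
    · intro hP i hi ⟨ha, hb⟩
      have e1 : ¬ Odd (1 + 1) := by decide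
      rcases Finset.mem_insert.1 ha with ha | ha <;> rcases Finset.mem_insert.1 hb with hb | hb
      · omega
      · exact e1 (ha ▸ hi)
      · have := hB _ ha; omega
      · exact hP i hi ⟨ha, hb⟩
  have hd : dropDec A (insert 1 B) 0 (m :: c) = (m - 1) :: dropDec A B 1 c := by
    simp only [dropDec, a1, zero_add, Finset.mem_insert, true_or, if_true, if_false]
    rw [dropDec_congr (A' := A) (B' := B) (fun i hi => Iff.rfl) (fun i hi => by
      have : i ≠ 1 := by omega
      simp [*])]
  simp only [term, hP, hd, Finset.card_insert_of_notMem b1]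
  split_ifs
  · rw [← add_assoc, pow_succ]; simp
  · simp

theorem finSum_eq_endSum (m : ℕ) (c : List ℕ) (K : ℕ → List ℕ → Bw) :
    finSum 1 0 (m :: c) K = endSum (m :: c) K := by
  have h : Even (1 + 1) := by decide
  simp only [finSum, sum_powerset_posOf_cons, endSum]
  rw [← finSum_eq_slotSum c h, ← finSum_eq_slotSum c h]
  simp only [finSum]
  have key : ∀ A ∈ (posOf (· = 1) 1 c).powerset,
      ∀ B ∈ (posOf (1 < ·) 1 c).powerset,
      (∀ i ∈ A, 1 < i) ∧ (∀ i ∈ B, 1 < i) := fun A hA B hB =>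
    ⟨fun i hi => lt_of_mem_posOf (Finset.mem_powerset.1 hA hi),
      fun i hi => lt_of_mem_posOf (Finset.mem_powerset.1 hB hi)⟩
  rcases (by omega : m = 0 ∨ m = 1 ∨ 1 < m) with rfl | rfl | hm <;>
  (try have hm' : m ≠ 1 := by omega) <;>
  simp only [*, ite_true, ite_false, lt_irrefl, not_lt_zero, zero_ne_one, add_zero, sub_zero,
    zero_add, ← Finset.sum_add_distrib, ← Finset.sum_sub_distrib] <;>
  refine Finset.sum_congr rfl fun A hA => ?_ <;>
  refine Finset.sum_congr rfl fun B hB => ?_ <;>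
  obtain ⟨hA', hB'⟩ := key A hA B hB <;>
  simp [term_head hA' hB', term_head_del hA', term_head_dec hA' hB'] <;> abel

/-! ### The recursion for `𝔇` as slot sums -/

/-- Left multiplication by `x`. -/
def Xop : Module.End ℚ Bw := Finsupp.lmapDomain ℚ ℚ (false :: ·)

/-- Left multiplication by `y`. -/
def Yop : Module.End ℚ Bw := Finsupp.lmapDomain ℚ ℚ (true :: ·)

/-- Left multiplication by `x^{n-1}y`, read as zero for `n < 2`: this absorbs the condition
`#A + #B ≥ 2` in the last two sums defining `𝔇`. -/
def XYop (n : ℕ) : Module.End ℚ Bw := if 2 ≤ n then Xop ^ (n - 1) * Yop else 0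

theorem mapDomain_replicate (n : ℕ) (v : Bw) :
    Finsupp.mapDomain (fun w => List.replicate n false ++ w) v = (Xop ^ n) v := by
  induction n with
  | zero => exact Finsupp.mapDomain_id
  | succ n ih =>
    rw [pow_succ', Module.End.mul_apply, ← ih]
    simp only [Xop, Finsupp.lmapDomain_apply, ← Finsupp.mapDomain_comp]
    rfl

theorem mapDomain_replicate_true (n : ℕ) (v : Bw) :
    Finsupp.mapDomain (fun w => List.replicate n false ++ true :: w) v =
      (Xop ^ n * Yop) v := by
  rw [Module.End.mul_apply, ← mapDomain_replicate]
  simp only [Yop, Finsupp.lmapDomain_apply, ← Finsupp.mapDomain_comp]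
  rfl

theorem sum_filter_eq_term {o1 o2 : Finset ℕ} {s d : ℕ} (c : List ℕ)
    (pA pB : Finset ℕ → Prop) (hpA : ∀ A ⊆ o1, pA A ↔ PairA s A)
    (hpB : ∀ B ⊆ o2, pB B ↔ PairB s B) (F : ℕ → List ℕ → Bw) :
    (∑ A ∈ o1.powerset.filter pA,
      ∑ B ∈ o2.powerset.filter (fun B => d ≤ A.card + B.card ∧ pB B),
        ((-1 : ℚ) ^ B.card) • F (A.card + B.card) (dropDec A B 0 c)) =
    ∑ A ∈ o1.powerset, ∑ B ∈ o2.powerset,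
      term s 0 c (fun n c' => if d ≤ n then F n c' else 0) A B := by
  rw [Finset.sum_filter]
  refine Finset.sum_congr rfl fun A hA => ?_
  rw [Finset.sum_filter]
  simp only [hpA A (Finset.mem_powerset.1 hA)]
  by_cases h : PairA s A
  · rw [if_pos h]
    refine Finset.sum_congr rfl fun B hB => ?_
    simp only [hpB B (Finset.mem_powerset.1 hB), term, h, true_and]
    by_cases h1 : d ≤ A.card + B.card <;> by_cases h2 : PairB s B <;> simp [h1, h2]
  · simp [h, term]

/-- The recursion for `𝔇` in terms of slot sums. -/
theorem Dfuel_succ (f k : ℕ) (t : List ℕ) :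
    Dfuel (f + 1) (k :: t) =
      - endSum (k :: t) (fun n c => if 1 ≤ n then (Xop ^ n) (Dfuel f c) else 0)
      - endSum (k :: t) (fun n c => XYop n (Dfuel f c))
      + slotSum (k :: t) (fun n c => XYop n (Dfuel f c)) := by
  rw [← finSum_eq_endSum, ← finSum_eq_endSum, ← finSum_eq_slotSum (s := 0) (o := 0) _ (by decide)]
  have hP (p : ℕ → Prop) := filter_eq_posOf p 0 (k :: t)
  simp only [zero_add, Nat.sub_zero] at hP
  have hN (A B : Finset ℕ) := filterMap_eq_dropDec A B 0 (k :: t)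
  simp only [zero_add] at hN
  have h1 : ((Finset.Icc 1 (k :: t).length).filter fun i => (k :: t).getD (i - 1) 0 = 1) =
      posOf (· = 1) 0 (k :: t) := by rw [← hP (· = 1)]; congr
  have h2 : ((Finset.Icc 1 (k :: t).length).filter fun i => 1 < (k :: t).getD (i - 1) 0) =
      posOf (1 < ·) 0 (k :: t) := by rw [← hP (1 < ·)]; congr
  have hpos : ∀ p, ∀ B ⊆ posOf p 0 (k :: t), 0 ∉ B := fun p B hB h0 =>
    lt_irrefl _ (lt_of_mem_posOf (hB h0))
  have hE : ∀ i, Even (i + 1) ↔ Odd i := fun i => by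
    rw [Nat.even_add_one, Nat.not_even_iff_odd]
  have hO : ∀ i, Odd (i + 1) ↔ Even i := fun i => by
    rw [Nat.odd_add_one, Nat.not_odd_iff_even]
  have e1 : ∀ B ⊆ posOf (1 < ·) 0 (k :: t),
      (∀ l : ℕ, 1 ≤ l → ¬(2 * l ∈ B ∧ 2 * l + 1 ∈ B)) ↔ PairB 1 B := by
    intro B hB
    constructor
    · rintro h i hi ⟨ha, hb⟩
      obtain ⟨l, rfl⟩ := (hO i).1 hi
      rcases Nat.eq_zero_or_pos l with rfl | hl
      · exact hpos _ B hB (by simpa using ha)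
      · exact h l hl ⟨by rwa [two_mul], by rwa [two_mul]⟩
    · intro h l hl
      exact h (2 * l) ((hO _).2 (even_two_mul l))
  have e2 : ∀ B ⊆ posOf (1 < ·) 0 (k :: t),
      (∀ l : ℕ, 1 ≤ l → ¬(2 * l - 1 ∈ B ∧ 2 * l ∈ B)) ↔ PairB 0 B := by
    intro B hB
    constructor
    · rintro h i hi ⟨ha, hb⟩
      obtain ⟨l, hl⟩ := hi
      refine h (l + 1) (by omega) ⟨?_, ?_⟩
      · rwa [show 2 * (l + 1) - 1 = i by omega]
      · rwa [show 2 * (l + 1) = i + 1 by omega]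
    · rintro h l hl ⟨ha, hb⟩
      refine h (2 * l - 1) ⟨l - 1, by omega⟩ ⟨ha, ?_⟩
      rwa [show 2 * l - 1 + 1 = 2 * l by omega]
  have a1 : ∀ A ⊆ posOf (· = 1) 0 (k :: t),
      (∀ i ∈ A, (Even i → i + 1 ∈ A) ∧ (Odd i → i - 1 ∈ A)) ↔ PairA 1 A := by
    intro A hA
    simp only [PairA, hE, hO]
  have a2 : ∀ A ⊆ posOf (· = 1) 0 (k :: t),
      (∀ i ∈ A, (Odd i → i + 1 ∈ A) ∧ (Even i → i - 1 ∈ A)) ↔ PairA 0 A := by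
    intro A hA
    simp only [PairA, add_zero]
  have s1 := sum_filter_eq_term (d := 1) (k :: t) _ _ a1 e1
    (fun n c => (Xop ^ n) (Dfuel f c))
  have s2 := sum_filter_eq_term (d := 2) (k :: t) _ _ a1 e1
    (fun n c => (Xop ^ (n - 1) * Yop) (Dfuel f c))
  have s3 := sum_filter_eq_term (d := 2) (k :: t) _ _ a2 e2
    (fun n c => (Xop ^ (n - 1) * Yop) (Dfuel f c))
  have hX : (fun n c => if 2 ≤ n then (Xop ^ (n - 1) * Yop) (Dfuel f c) else 0) =
      fun n c => XYop n (Dfuel f c) := by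
    funext n c
    by_cases h : 2 ≤ n <;> simp [XYop, h]
  rw [hX] at s2 s3
  simp only [finSum, ← s1, ← s2, ← s3]
  rw [Dfuel]
  dsimp only
  rw [h1, h2]
  simp only [hN, mapDomain_replicate, mapDomain_replicate_true, pow_succ (-1 : ℚ), mul_neg,
    mul_one, neg_smul, Finset.sum_neg_distrib]
  rw [← sub_eq_add_neg]
  congr!

/-! ### Independence of the fuel -/

/-- All tuples occurring in `slotSum c K` satisfy `#A + #B + Σ c' = Σ c`, because deleted entries are
equal to `1`. -/
theorem slotSum_congr {K K' : ℕ → List ℕ → M} (c : List ℕ)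
    (h : ∀ n c', n + c'.sum = c.sum → K n c' = K' n c') : slotSum c K = slotSum c K' := by
  fun_induction slotSum c K generalizing K' with
  | case1 K => simpa [slotSum] using h 0 [] rfl
  | case2 m K =>
    simp only [slotSum]
    rw [h 0 [m] (by simp)]
    split_ifs
    · rw [h 1 [m - 1] (by simp; omega)]
    · rfl
  | case3 m l c K ih1 ih2 ih3 ih4 =>
    simp only [slotSum]
    simp only [List.sum_cons] at h
    congr 1; congr 1; congr 1
    · exact ih1 fun n c' hc => h _ _ (by simp; omega)
    · split_ifs with hml
      · exact ih2 fun n c' hc => h _ _ (by omega)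
      · rfl
    · split_ifs with hm
      · exact ih3 fun n c' hc => h _ _ (by simp; omega)
      · rfl
    · split_ifs with hl
      · exact ih4 fun n c' hc => h _ _ (by simp; omega)
      · rfl

theorem endSum_congr {K K' : ℕ → List ℕ → M} (c : List ℕ)
    (h : ∀ n c', n + c'.sum = c.sum → K n c' = K' n c') : endSum c K = endSum c K' := by
  cases c with
  | nil => exact h 0 [] rfl
  | cons m c =>
    simp only [endSum]
    simp only [List.sum_cons] at h
    congr 1
    · exact slotSum_congr _ fun n c' hc => h _ _ (by simp; omega)
    · split_ifs
      · exact slotSum_congr _ fun n c' hc => h _ _ (by simp; omega)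
      · rfl

/-- Splits off the term `A = B = ∅`. -/
theorem slotSum_split (c : List ℕ) (K : ℕ → List ℕ → M) :
    slotSum c K = K 0 c + slotSum c (fun n c' => if 1 ≤ n then K n c' else 0) := by
  fun_induction slotSum c K with
  | case1 K => simp [slotSum]
  | case2 m K => simp [slotSum, sub_eq_add_neg]
  | case3 m l c K ih1 ih2 ih3 ih4 =>
    rw [slotSum]
    simp only [Nat.le_add_left, if_true, show ∀ n, 1 ≤ n + 2 by omega]
    rw [ih1]
    abel

theorem endSum_split (c : List ℕ) (K : ℕ → List ℕ → M) :
    endSum c K = K 0 c + endSum c (fun n c' => if 1 ≤ n then K n c' else 0) := by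
  cases c with
  | nil => simp [endSum]
  | cons m c =>
    simp only [endSum, Nat.le_add_left, if_true]
    rw [slotSum_split c (fun n c' => K n (m :: c'))]
    abel

theorem map_slotSum {N : Type*} [AddCommGroup N] (φ : M →+ N) (c : List ℕ)
    (K : ℕ → List ℕ → M) : φ (slotSum c K) = slotSum c (fun n c' => φ (K n c')) := by
  fun_induction slotSum c K with
  | case1 K => simp [slotSum]
  | case2 m K => simp [slotSum, apply_ite φ]
  | case3 m l c K ih1 ih2 ih3 ih4 =>
    rw [slotSum]
    simp only [← ih1, ← ih2, ← ih3, ← ih4, map_add, map_sub, apply_ite φ, map_zero]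

theorem slotSum_add (c : List ℕ) (K K' : ℕ → List ℕ → M) :
    slotSum c (fun n c' => K n c' + K' n c') = slotSum c K + slotSum c K' := by
  have h := map_slotSum (AddMonoidHom.coprod (AddMonoidHom.id M) (AddMonoidHom.id M)) c
    (fun n c' => (K n c', K' n c'))
  have h1 := map_slotSum (AddMonoidHom.fst M M) c (fun n c' => (K n c', K' n c'))
  have h2 := map_slotSum (AddMonoidHom.snd M M) c (fun n c' => (K n c', K' n c'))
  simp only [AddMonoidHom.coprod_apply, AddMonoidHom.id_apply, AddMonoidHom.coe_fst,
    AddMonoidHom.coe_snd] at h h1 h2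
  rw [← h, h1, h2]

/-- `Dfuel` does not depend on the fuel once it exceeds the sum of the tuple. -/
theorem Dfuel_congr : ∀ (f f' : ℕ) (c : List ℕ), c.sum < f → c.sum < f' →
    Dfuel f c = Dfuel f' c
  | 0, _, _, h, _ => by omega
  | _, 0, _, _, h => by omega
  | f + 1, f' + 1, [], _, _ => by simp [Dfuel]
  | f + 1, f' + 1, k :: t, h, h' => by
    rw [Dfuel_succ, Dfuel_succ]
    have hD (n : ℕ) (c' : List ℕ) (hc : n + c'.sum = (k :: t).sum) (hn : 1 ≤ n) :
        Dfuel f c' = Dfuel f' c' := Dfuel_congr f f' c' (by omega) (by omega)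
    have hXY (n : ℕ) (c' : List ℕ) (hc : n + c'.sum = (k :: t).sum) :
        XYop n (Dfuel f c') = XYop n (Dfuel f' c') := by
      by_cases hn : 1 ≤ n
      · rw [hD n c' hc hn]
      · simp [XYop, show ¬ 2 ≤ n by omega]
    rw [slotSum_congr _ hXY, endSum_congr _ hXY]
    congr 3
    refine endSum_congr _ fun n c' hc => ?_
    split_ifs with hn
    · rw [hD n c' hc hn]
    · rfl

theorem DropD_nil : DropD [] = Finsupp.single [] 1 := by simp [DropD, Dfuel]

/-- The recursion defining `𝔇` with `𝔇(𝐜)` itself included as the term `A = B = ∅` of the first sum: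
the even–odd sum with weights `x^n` is the odd–even minus the even–odd sum with weights
`x^{n-1}y`. -/
theorem DropD_eq (c : List ℕ) (hc : c ≠ []) :
    endSum c (fun n c' => (Xop ^ n) (DropD c')) =
      slotSum c (fun n c' => XYop n (DropD c')) -
      endSum c (fun n c' => XYop n (DropD c')) := by
  obtain ⟨k, t, rfl⟩ := List.exists_cons_of_ne_nil hc
  have hD (n : ℕ) (c' : List ℕ) (hc : n + c'.sum = (k :: t).sum) (hn : 1 ≤ n) :
      DropD c' = Dfuel (k :: t).sum c' := Dfuel_congr _ _ c' (by omega) (by omega)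
  have hXY (n : ℕ) (c' : List ℕ) (hc : n + c'.sum = (k :: t).sum) :
      XYop n (DropD c') = XYop n (Dfuel (k :: t).sum c') := by
    by_cases hn : 1 ≤ n
    · rw [hD n c' hc hn]
    · simp [XYop, show ¬ 2 ≤ n by omega]
  rw [endSum_split, slotSum_congr _ hXY, endSum_congr _ hXY, pow_zero, Module.End.one_apply,
    DropD, Dfuel_succ]
  rw [endSum_congr (K := fun n c' => if 1 ≤ n then (Xop ^ n) (DropD c') else 0)
    (K' := fun n c' => if 1 ≤ n then (Xop ^ n) (Dfuel (k :: t).sum c') else 0)]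
  · abel
  · intro n c' hc
    split_ifs with hn
    · rw [hD n c' hc hn]
    · rfl

/-! ### Tuples with one entry greater than one -/

/-- The tuple `1, 1, …, 1, c` with `2a` leading ones. -/
def pre : ℕ → List ℕ → List ℕ
  | 0, c => c
  | a + 1, c => 1 :: 1 :: pre a c

theorem one_cons_pre (a : ℕ) (c : List ℕ) : 1 :: pre a c = pre a (1 :: c) := by
  induction a with
  | zero => rfl
  | succ a ih => simp [pre, ih]

theorem pre_ones (a : ℕ) (c : List ℕ) : pre a (1 :: 1 :: c) = 1 :: 1 :: pre a c := by
  rw [← one_cons_pre, ← one_cons_pre]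

/-- `Bop n f = Σ f i j` over the `2ⁿ` ways of splitting an `n`-set into parts of sizes `i`
and `j`. -/
def Bop : ℕ → (ℕ → ℕ → M) → M
  | 0, f => f 0 0
  | n + 1, f => Bop n (fun i j => f i (j + 1)) + Bop n (fun i j => f (i + 1) j)

theorem Bop_add (n : ℕ) (f g : ℕ → ℕ → M) :
    Bop n (fun i j => f i j + g i j) = Bop n f + Bop n g := by
  induction n generalizing f g with
  | zero => rfl
  | succ n ih => simp only [Bop, ih]; abel

theorem map_Bop {N : Type*} [AddCommGroup N] (φ : M →+ N) (n : ℕ) (f : ℕ → ℕ → M) :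
    φ (Bop n f) = Bop n (fun i j => φ (f i j)) := by
  induction n generalizing f with
  | zero => rfl
  | succ n ih => simp only [Bop, map_add, ih]

theorem Bop_neg (n : ℕ) (f : ℕ → ℕ → M) : Bop n (fun i j => - f i j) = - Bop n f :=
  (map_Bop (negAddMonoidHom : M →+ M) n f).symm

theorem Bop_sub (n : ℕ) (f g : ℕ → ℕ → M) :
    Bop n (fun i j => f i j - g i j) = Bop n f - Bop n g := by
  simp only [sub_eq_add_neg, Bop_add, Bop_neg]

theorem Bop_comm (n m : ℕ) (f : ℕ → ℕ → ℕ → ℕ → M) :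
    Bop n (fun i j => Bop m (fun i' j' => f i j i' j')) =
      Bop m (fun i' j' => Bop n (fun i j => f i j i' j')) := by
  induction n generalizing f with
  | zero => rfl
  | succ n ih => simp only [Bop, ih, Bop_add]

theorem Bop_top (n : ℕ) (f : ℕ → ℕ → M) (h : ∀ i j, j < n → f i j = 0) :
    Bop n f = f 0 n := by
  induction n generalizing f with
  | zero => rfl
  | succ n ih =>
    rw [Bop, ih _ fun i j hj => h i (j + 1) (by omega), ih _ fun i j hj => h _ j (by omega),
      h _ n (by omega), add_zero]

/-- The triangular system `Σ_{S ⊆ [n]} x^{2#S} Z_{n-#S} = 0` has only the zero solution. -/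
theorem Bop_vanish {Z : ℕ → Bw}
    (h : ∀ n, Bop n (fun i j => (Xop ^ (2 * i)) (Z j)) = 0) (n : ℕ) : Z n = 0 := by
  induction n using Nat.strong_induction_on with
  | _ n ih =>
    have := h n
    rw [Bop_top n _ fun i j hj => by rw [ih j hj, map_zero]] at this
    simpa using this

theorem slotSum_pre (a : ℕ) (c : List ℕ) (K : ℕ → List ℕ → M) :
    slotSum (pre a c) K =
      Bop a (fun i j => slotSum c (fun n c' => K (n + 2 * i) (pre j c'))) := by
  induction a generalizing K with
  | zero => rfl
  | succ a ih =>
    simp [pre, slotSum, ih, Bop]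
    rfl

theorem endSum_pre_succ (a : ℕ) (c : List ℕ) (K : ℕ → List ℕ → M) :
    endSum (pre (a + 1) c) K =
      Bop a (fun i j => slotSum (1 :: c) (fun n c' => K (n + 2 * i) (1 :: pre j c'))) := by
  simp [pre, endSum, one_cons_pre a c, slotSum_pre]

theorem XYop_two_mul_add (i n : ℕ) :
    XYop (2 * i + (n + 2)) = Xop ^ (2 * i) * (Xop ^ (n + 1) * Yop) := by
  rw [XYop, if_pos (by omega), ← mul_assoc, ← pow_add]
  rfl

theorem slotSum_ones (a : ℕ) (K : ℕ → List ℕ → M) :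
    slotSum (pre a []) K = Bop a (fun i j => K (2 * i) (pre j [])) := by
  simp [slotSum_pre, slotSum]

theorem slotSum_ones_one (a : ℕ) (K : ℕ → List ℕ → M) :
    slotSum (pre a [1]) K = Bop a (fun i j => K (2 * i) (pre j [1])) := by
  simp [slotSum_pre, slotSum]

theorem endSum_ones (a : ℕ) (K : ℕ → List ℕ → M) :
    endSum (pre (a + 1) []) K = Bop a (fun i j => K (2 * i) (pre (j + 1) [])) := by
  rw [endSum_pre_succ]
  simp [slotSum, pre, one_cons_pre]

/-- `𝔇(1,1,𝐜) = xy 𝔇(𝐜)` for `𝐜 = (1, …, 1)` of even length. -/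
theorem DropD_ones_succ (a : ℕ) : DropD (pre (a + 1) []) = Xop (Yop (DropD (pre a []))) := by
  rw [← sub_eq_zero]
  refine Bop_vanish (Z := fun a => DropD (pre (a + 1) []) - Xop (Yop (DropD (pre a []))))
    (fun n => ?_) a
  have h := DropD_eq (pre (n + 1) []) (by simp [pre])
  rw [slotSum_ones, endSum_ones, endSum_ones, Bop, add_sub_cancel_left] at h
  simp only [map_sub, Bop_sub, h]
  rw [sub_eq_zero]
  congr! 3 with i j

/-- For two-parameter families of tuples `L a b` in which exactly one entry exceeds `1`, and
`L' a b` obtained by lowering it, the recursion for `𝔇` decouples into two-term relations. -/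
theorem DropD_family {L L' : ℕ → ℕ → List ℕ} (hne : ∀ a b, L a b ≠ [])
    (hs : ∀ a b (K : ℕ → List ℕ → Bw), slotSum (L a b) K = Bop a fun i j => Bop b fun i' j' =>
      K (2 * i + 2 * i') (L j j') - K (2 * i + 2 * i' + 1) (L' j j'))
    (he0 : ∀ b (K : ℕ → List ℕ → Bw), endSum (L 0 b) K = Bop b fun i' j' =>
      K (2 * i') (L 0 j') - K (2 * i' + 1) (L' 0 j'))
    (he : ∀ a b (K : ℕ → List ℕ → Bw), endSum (L (a + 1) b) K =
      Bop a fun i j => Bop b fun i' j' =>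
        K (2 * i + 2 * i') (L (j + 1) j') - K (2 * i + 2 * i' + 1) (L' (j + 1) j')) :
    (∀ b, DropD (L 0 b) = Xop (DropD (L' 0 b))) ∧
    ∀ a b, DropD (L (a + 1) b) - Xop (DropD (L' (a + 1) b)) =
      Xop (Yop (DropD (L a b))) - Xop (Xop (Yop (DropD (L' a b)))) := by
  constructor
  · intro b
    rw [← sub_eq_zero]
    refine Bop_vanish (Z := fun b => DropD (L 0 b) - Xop (DropD (L' 0 b))) (fun n => ?_) b
    have h := DropD_eq (L 0 n) (hne _ _)
    rw [hs, he0, he0] at h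
    simp only [Bop, mul_zero, zero_add, sub_self] at h
    simpa only [map_sub, pow_succ, Module.End.mul_apply] using h
  · intro a b
    rw [← sub_eq_zero]
    set Z : ℕ → ℕ → Bw := fun a b => DropD (L (a + 1) b) - Xop (DropD (L' (a + 1) b)) -
      (Xop (Yop (DropD (L a b))) - Xop (Xop (Yop (DropD (L' a b))))) with hZ
    refine Bop_vanish (Z := fun b => Z a b) (fun n => ?_) b
    refine Bop_vanish (Z := fun a => Bop n (fun i j => (Xop ^ (2 * i)) (Z a j))) (fun m => ?_) a
    have h := DropD_eq (L (m + 1) n) (hne _ _)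
    rw [hs, he, he, Bop, add_sub_cancel_left, ← sub_eq_zero, ← Bop_sub] at h
    rw [← h]
    congr 1; funext i j
    rw [← Bop_sub]
    refine (map_Bop (Xop ^ (2 * i)).toAddMonoidHom n _).trans ?_
    congr 1; funext i' j'
    have h0 := XYop_two_mul_add (i + i') 0
    have h1 := XYop_two_mul_add (i + i') 1
    rw [show 2 * (i + 1) + 2 * i' = 2 * (i + i') + (0 + 2) by ring, h0,
      show 2 * (i + i') + (0 + 2) + 1 = 2 * (i + i') + (1 + 2) by ring, h1, ← mul_add]
    rw [mul_add]
    simp [hZ, pow_add, pow_succ, Module.End.mul_apply]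

theorem DropD_family_eq (L L' : ℕ → ℕ → List ℕ) (hne : ∀ a b, L a b ≠ [])
    (hs : ∀ a b (K : ℕ → List ℕ → Bw), slotSum (L a b) K = Bop a fun i j => Bop b fun i' j' =>
      K (2 * i + 2 * i') (L j j') - K (2 * i + 2 * i' + 1) (L' j j'))
    (he0 : ∀ b (K : ℕ → List ℕ → Bw), endSum (L 0 b) K = Bop b fun i' j' =>
      K (2 * i') (L 0 j') - K (2 * i' + 1) (L' 0 j'))
    (he : ∀ a b (K : ℕ → List ℕ → Bw), endSum (L (a + 1) b) K =
      Bop a fun i j => Bop b fun i' j' =>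
        K (2 * i + 2 * i') (L (j + 1) j') - K (2 * i + 2 * i' + 1) (L' (j + 1) j'))
    (h' : ∀ a b, DropD (L' (a + 1) b) = Xop (Yop (DropD (L' a b)))) (a b : ℕ) :
    DropD (L a b) = ((Xop * Yop) ^ a) (Xop (DropD (L' 0 b))) := by
  have h := DropD_family hne hs he0 he
  induction a with
  | zero => simpa using h.1 b
  | succ a ih =>
    have := h.2 a b
    rw [h', sub_left_inj] at this
    rw [this, ih, pow_succ']
    rfl

/-- `𝔇` of an all-ones tuple with one odd-position entry raised to `m`, provided prefixing `1, 1`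
corresponds to left multiplication by `xy` when that entry is `m - 1`. -/
theorem DropD_odd (m a b : ℕ) (hm : 1 < m)
    (h' : ∀ a b, DropD (pre (a + 1) ((m - 1) :: 1 :: pre b [])) =
      Xop (Yop (DropD (pre a ((m - 1) :: 1 :: pre b []))))) :
    DropD (pre a (m :: 1 :: pre b [])) =
      ((Xop * Yop) ^ a) (Xop (DropD ((m - 1) :: 1 :: pre b []))) := by
  have hm' : m ≠ 1 := by omega
  refine DropD_family_eq (fun a b => pre a (m :: 1 :: pre b []))
    (fun a b => pre a ((m - 1) :: 1 :: pre b [])) ?_ ?_ ?_ ?_ h' a b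
  · intro a b; cases a <;> simp [pre]
  · intro a b K
    simp [slotSum_pre, slotSum, hm, hm', Bop_sub, add_comm, add_left_comm]
  · intro b K
    simp [pre, endSum, one_cons_pre, slotSum_ones_one, hm, Bop_sub]
  · intro a b K
    rw [endSum_pre_succ]
    simp [slotSum, one_cons_pre, slotSum_ones_one, hm, hm', Bop_sub,
      pre, add_comm, add_left_comm]

/-- `𝔇` of an all-ones tuple with one even-position entry raised to `m`; here the roles of the
blocks before and after that entry are exchanged in the value. -/
theorem DropD_even (m a b : ℕ) (hm : 1 < m)
    (h' : ∀ a b, DropD (pre b (1 :: (m - 1) :: pre (a + 1) [])) =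
      Xop (Yop (DropD (pre b (1 :: (m - 1) :: pre a []))))) :
    DropD (pre b (1 :: m :: pre a [])) =
      ((Xop * Yop) ^ a) (Xop (DropD (pre b [1, m - 1]))) := by
  have hm' : m ≠ 1 := by omega
  have hs (a b : ℕ) (K : ℕ → List ℕ → Bw) : slotSum (pre b (1 :: m :: pre a [])) K =
      Bop a fun i j => Bop b fun i' j' =>
        K (2 * i + 2 * i') (pre j' (1 :: m :: pre j [])) -
          K (2 * i + 2 * i' + 1) (pre j' (1 :: (m - 1) :: pre j [])) := by
    rw [Bop_comm]
    simp [slotSum_pre, slotSum, hm, hm', Bop_sub, add_comm, add_left_comm]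
  have he (b : ℕ) (c : List ℕ) (K : ℕ → List ℕ → Bw) : endSum (pre b (1 :: c)) K =
      slotSum (pre b c) (fun n c' => K n (1 :: c')) := by
    simp [← one_cons_pre, endSum]
  refine DropD_family_eq (fun a b => pre b (1 :: m :: pre a []))
    (fun a b => pre b (1 :: (m - 1) :: pre a [])) ?_ ?_ ?_ ?_ (fun a b => h' a b) a b
  · intro a b; cases b <;> simp [pre]
  · exact hs
  · intro b K
    simp only [he, slotSum_pre]
    simp [slotSum, pre, one_cons_pre, hm, add_comm]
  · intro a b K
    simp only [he, slotSum_pre, pre, slotSum]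
    rw [Bop_comm]
    simp [one_cons_pre, slotSum_ones_one, hm, hm', Bop_sub, add_comm, add_left_comm]

/-- The empty word. -/
def eW : Bw := Finsupp.single [] 1

theorem DropD_ones (r : ℕ) : DropD (pre r []) = ((Xop * Yop) ^ r) eW := by
  induction r with
  | zero => exact DropD_nil
  | succ r ih => rw [DropD_ones_succ, ih, pow_succ']; rfl

theorem DropD_odd_two (a b : ℕ) : DropD (pre a (2 :: 1 :: pre b [])) =
    ((Xop * Yop) ^ a) (Xop (Xop (Yop (((Xop * Yop) ^ b) eW)))) := by
  have h (a b : ℕ) : pre a ((2 - 1) :: 1 :: pre b []) = pre (a + (b + 1)) [] := by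
    induction a with
    | zero => simp [pre]
    | succ a ih => rw [show a + 1 + (b + 1) = a + (b + 1) + 1 by ring, pre, ih, pre]
  rw [DropD_odd 2 a b (by omega) fun a b => ?_]
  · rw [← DropD_ones, ← DropD_ones_succ]; rfl
  · rw [h, h, show a + 1 + (b + 1) = a + (b + 1) + 1 by ring, DropD_ones_succ]

theorem DropD_odd_three (a b : ℕ) : DropD (pre a (3 :: 1 :: pre b [])) =
    ((Xop * Yop) ^ a) (Xop (Xop (Xop (Yop (((Xop * Yop) ^ b) eW))))) := by
  have h2 (a b : ℕ) : DropD (pre a ((3 - 1) :: 1 :: pre b [])) = _ := DropD_odd_two a b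
  rw [DropD_odd 3 a b (by omega) fun a b => ?_]
  · have := h2 0 b
    rw [pre] at this
    rw [this]; rfl
  · rw [h2, h2, pow_succ']; rfl

theorem DropD_even_two (a b : ℕ) : DropD (pre b (1 :: 2 :: pre a [])) =
    ((Xop * Yop) ^ a) (Xop (Xop (Yop (((Xop * Yop) ^ b) eW)))) := by
  have h (a b : ℕ) : pre b (1 :: (2 - 1) :: pre a []) = pre (a + (b + 1)) [] := by
    induction b with
    | zero => simp [pre]
    | succ b ih => rw [show a + (b + 1 + 1) = a + (b + 1) + 1 by ring, pre, ih, pre]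
  rw [DropD_even 2 a b (by omega) fun a b => ?_]
  · have := h 0 b
    rw [pre, zero_add] at this
    rw [this, DropD_ones_succ, DropD_ones]
  · rw [h, h, show a + 1 + (b + 1) = a + (b + 1) + 1 by ring, DropD_ones_succ]

/-! ### Sums over tuples with two raised entries -/

/-- `Σ_{a+1+b=n} K((1,1)^a, 1, 2, (1,1)^b)`: one even-position entry of `(1,1)^n` is raised to `2`. -/
def Qf : ℕ → (List ℕ → M) → M
  | 0, _ => 0
  | n + 1, K => Qf n (fun c => K (1 :: 1 :: c)) + K (1 :: 2 :: pre n [])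

/-- The sum of `K` over the tuples obtained from `(1,1)^n` by raising to `2` an odd-position entry
and a later even-position entry. These tuples encode the nontrivial words of `z₂^n ⧢ z₂`. -/
def Tf : ℕ → (List ℕ → M) → M
  | 0, _ => 0
  | n + 1, K => Tf n (fun c => K (1 :: 1 :: c)) + Qf n (fun c => K (2 :: 1 :: c)) +
      K (2 :: 2 :: pre n [])

/-- The sum of `K` over the tuples obtained from those of `Tf` by lowering one of the two entries `2`
back to `1`, with multiplicity. -/
def Vf : ℕ → (List ℕ → M) → M
  | 0, _ => 0
  | n + 1, K => Vf n (fun c => K (1 :: 1 :: c)) + Qf n (fun c => K (1 :: 1 :: c)) +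
      K (1 :: 2 :: pre n []) + (n + 1) • K (2 :: 1 :: pre n [])

/-- `Σ_{a+1+b=n} K((1,1)^a, 3, 1, (1,1)^b)`. These tuples encode the words of `z₂^n * z₂` that
contain a `z₄`. -/
def Uf : ℕ → (List ℕ → M) → M
  | 0, _ => 0
  | n + 1, K => Uf n (fun c => K (1 :: 1 :: c)) + K (3 :: 1 :: pre n [])

/-- The sum of `K` over the tuples obtained from `(1,1)^n, 1` by raising one odd-position entry
to `2`. -/
def Qo : ℕ → (List ℕ → M) → M
  | 0, K => K [2]
  | n + 1, K => Qo n (fun c => K (1 :: 1 :: c)) + K (2 :: 1 :: pre n [1])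

/-- The sum of `K` over the tuples obtained from `(1,1)^n, 1` by raising to `2` an even-position
entry and a later odd-position entry: the tails of the tuples of `Tf (n + 1)` that start with `1`. -/
def To : ℕ → (List ℕ → M) → M
  | 0, _ => 0
  | n + 1, K => To n (fun c => K (1 :: 1 :: c)) + Qo n (fun c => K (1 :: 2 :: c))

/-- The sum of `K` over the tuples obtained from those of `To` by lowering one of the two entries `2`
back to `1`, with multiplicity. -/
def Vo : ℕ → (List ℕ → M) → M
  | 0, _ => 0
  | n + 1, K => Vo n (fun c => K (1 :: 1 :: c)) + Qo n (fun c => K (1 :: 1 :: c)) +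
      (n + 1) • K (1 :: 2 :: pre n [1])

theorem Qf_add (n : ℕ) (K K' : List ℕ → M) :
    Qf n (fun c => K c + K' c) = Qf n K + Qf n K' := by
  induction n generalizing K K' with
  | zero => simp [Qf]
  | succ n ih => simp only [Qf, ih]; abel

theorem Qo_add (n : ℕ) (K K' : List ℕ → M) :
    Qo n (fun c => K c + K' c) = Qo n K + Qo n K' := by
  induction n generalizing K K' with
  | zero => simp [Qo]
  | succ n ih => simp only [Qo, ih]; abel

theorem Tf_add (n : ℕ) (K K' : List ℕ → M) :
    Tf n (fun c => K c + K' c) = Tf n K + Tf n K' := by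
  induction n generalizing K K' with
  | zero => simp [Tf]
  | succ n ih => simp only [Tf, ih, Qf_add]; abel

theorem To_add (n : ℕ) (K K' : List ℕ → M) :
    To n (fun c => K c + K' c) = To n K + To n K' := by
  induction n generalizing K K' with
  | zero => simp [To]
  | succ n ih => simp only [To, ih, Qo_add]; abel

section map
variable {N : Type*} [AddCommGroup N] (φ : M →+ N)

theorem map_Qf (n : ℕ) (K : List ℕ → M) : φ (Qf n K) = Qf n (fun c => φ (K c)) := by
  induction n generalizing K with
  | zero => simp [Qf]
  | succ n ih => simp only [Qf, map_add, ih]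

theorem map_Qo (n : ℕ) (K : List ℕ → M) : φ (Qo n K) = Qo n (fun c => φ (K c)) := by
  induction n generalizing K with
  | zero => simp [Qo]
  | succ n ih => simp only [Qo, map_add, ih]

theorem map_Tf (n : ℕ) (K : List ℕ → M) : φ (Tf n K) = Tf n (fun c => φ (K c)) := by
  induction n generalizing K with
  | zero => simp [Tf]
  | succ n ih => simp only [Tf, map_add, ih, map_Qf]

theorem map_Vf (n : ℕ) (K : List ℕ → M) : φ (Vf n K) = Vf n (fun c => φ (K c)) := by
  induction n generalizing K with
  | zero => simp [Vf]
  | succ n ih => simp only [Vf, map_add, map_nsmul, ih, map_Qf]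

theorem map_Uf (n : ℕ) (K : List ℕ → M) : φ (Uf n K) = Uf n (fun c => φ (K c)) := by
  induction n generalizing K with
  | zero => simp [Uf]
  | succ n ih => simp only [Uf, map_add, ih]

end map

theorem Qf_sub (n : ℕ) (K K' : List ℕ → M) :
    Qf n (fun c => K c - K' c) = Qf n K - Qf n K' := by
  simp only [sub_eq_add_neg, Qf_add]
  exact congrArg _ (map_Qf (negAddMonoidHom : M →+ M) n K').symm

theorem Qo_sub (n : ℕ) (K K' : List ℕ → M) :
    Qo n (fun c => K c - K' c) = Qo n K - Qo n K' := by
  simp only [sub_eq_add_neg, Qo_add]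
  exact congrArg _ (map_Qo (negAddMonoidHom : M →+ M) n K').symm

theorem Tf_sub (n : ℕ) (K K' : List ℕ → M) :
    Tf n (fun c => K c - K' c) = Tf n K - Tf n K' := by
  simp only [sub_eq_add_neg, Tf_add]
  exact congrArg _ (map_Tf (negAddMonoidHom : M →+ M) n K').symm

theorem Qf_congr (n : ℕ) {K K' : List ℕ → M} (h : ∀ a t, K (a :: t) = K' (a :: t)) :
    Qf n K = Qf n K' := by
  cases n with
  | zero => rfl
  | succ n => simp [Qf, h]

theorem Tf_congr (n : ℕ) {K K' : List ℕ → M} (h : ∀ a t, K (a :: t) = K' (a :: t)) :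
    Tf n K = Tf n K' := by
  cases n with
  | zero => rfl
  | succ n => simp [Tf, h]

theorem Qf_succ_eq (n : ℕ) (K : List ℕ → M) :
    Qf (n + 1) K = Qo n (fun c => K (1 :: c)) := by
  induction n generalizing K with
  | zero => simp [Qf, Qo, pre]
  | succ n ih => rw [Qf, ih, Qo, pre, one_cons_pre, one_cons_pre]

theorem Tf_succ_eq (n : ℕ) (K : List ℕ → M) :
    Tf (n + 1) K = To n (fun c => K (1 :: c)) + Qo n (fun c => K (2 :: c)) := by
  induction n generalizing K with
  | zero => simp [Tf, Qf, To, Qo, pre]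
  | succ n ih =>
    rw [Tf, ih, Qf_succ_eq, To, Qo]
    simp only [pre, one_cons_pre]
    abel

theorem Vf_succ_eq (n : ℕ) (K : List ℕ → M) :
    Vf (n + 1) K = Vo n (fun c => K (1 :: c)) + Qo n (fun c => K (1 :: c)) +
      (n + 1) • K (2 :: pre n [1]) := by
  induction n generalizing K with
  | zero => simp [Vf, Qf, Vo, Qo, pre]
  | succ n ih =>
    rw [Vf, ih, Qf_succ_eq, Vo, Qo]
    simp only [pre, one_cons_pre]
    abel

theorem Qf_slotSum (n : ℕ) (K : ℕ → List ℕ → M) :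
    Qf n (fun c => slotSum c K) =
      Bop n (fun i j => Qf j (K (2 * i)) - j • K (2 * i + 1) (pre j [])) := by
  induction n generalizing K with
  | zero => simp [Qf, Bop]
  | succ n ih =>
    simp [Qf, slotSum, Bop, Qf_add, ih, slotSum_ones, ← Bop_add, ← Bop_sub, pre, mul_add, add_smul]
    congr 1; funext i j
    abel

theorem Tf_slotSum (n : ℕ) (K : ℕ → List ℕ → M) :
    Tf n (fun c => slotSum c K) =
      Bop n (fun i j => Tf j (K (2 * i)) - Vf j (K (2 * i + 1)) +
        (j.choose 2) • K (2 * i + 2) (pre j [])) := by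
  induction n generalizing K with
  | zero => simp [Tf, Vf, Bop]
  | succ n ih =>
    simp [Tf, Vf, slotSum, Tf_add, Qf_sub, ih, Qf_slotSum, Bop, slotSum_ones, ← Bop_add,
      ← Bop_sub, pre, mul_add, add_smul, Nat.choose_succ_succ]
    congr 1; funext i j
    abel

theorem Qo_slotSum (n : ℕ) (K : ℕ → List ℕ → M) :
    Qo n (fun c => slotSum c K) =
      Bop n (fun i j => Qo j (K (2 * i)) - (j + 1) • K (2 * i + 1) (pre j [1])) := by
  induction n generalizing K with
  | zero => simp [Qo, Bop, slotSum, pre]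
  | succ n ih =>
    simp [Qo, slotSum, Qo_add, ih, Bop, slotSum_ones_one, ← Bop_add, ← Bop_sub, pre, mul_add,
      add_smul]
    congr 1; funext i j
    abel

theorem To_slotSum (n : ℕ) (K : ℕ → List ℕ → M) :
    To n (fun c => slotSum c K) =
      Bop n (fun i j => To j (K (2 * i)) - Vo j (K (2 * i + 1)) +
        ((j + 1).choose 2) • K (2 * i + 2) (pre j [1])) := by
  induction n generalizing K with
  | zero => simp [To, Vo, Bop]
  | succ n ih =>
    simp [To, Vo, slotSum, To_add, Qo_sub, ih, Qo_slotSum, Bop, ← Bop_add,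
      ← Bop_sub, pre, mul_add, add_smul, Nat.choose_succ_succ]
    congr 1; funext i j
    abel

theorem Tf_endSum (n : ℕ) (K : ℕ → List ℕ → M) :
    Tf (n + 1) (fun c => endSum c K) =
      Bop n (fun i j => Tf (j + 1) (K (2 * i)) - Vf (j + 1) (K (2 * i + 1)) +
        ((j + 2).choose 2) • K (2 * i + 2) (pre (j + 1) [])) := by
  simp [Tf_succ_eq, Vf_succ_eq, endSum, Qo_sub, To_slotSum, Qo_slotSum, ← Bop_add,
      ← Bop_sub, pre, one_cons_pre, add_smul, Nat.choose_succ_succ]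
  congr 1; funext i j
  abel

/-! ### Values of `𝔇` -/

/-- The word `x^{c₁} y^{c₂} x^{c₃} y^{c₄} ⋯`. -/
def wordOf : List ℕ → List Bool
  | [] => []
  | [m] => List.replicate m false
  | m :: l :: c => List.replicate m false ++ (List.replicate l true ++ wordOf c)

/-- The word `x^{c₁} y^{c₂} ⋯` as an element of `Bw`. -/
def Ww (c : List ℕ) : Bw := Finsupp.single (wordOf c) 1

theorem Xop_single (w : List Bool) (q : ℚ) :
    Xop (Finsupp.single w q) = Finsupp.single (false :: w) q := by simp [Xop]

theorem Yop_single (w : List Bool) (q : ℚ) :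
    Yop (Finsupp.single w q) = Finsupp.single (true :: w) q := by simp [Yop]

theorem Ww_one_one (c : List ℕ) : Ww (1 :: 1 :: c) = Xop (Yop (Ww c)) := by
  simp [Ww, wordOf, Xop_single, Yop_single]

theorem Ww_pre (a : ℕ) (c : List ℕ) : Ww (pre a c) = ((Xop * Yop) ^ a) (Ww c) := by
  induction a with
  | zero => rfl
  | succ a ih => rw [pre, Ww_one_one, ih, pow_succ']; rfl

theorem Ww_nil : Ww [] = eW := rfl

theorem Ww_three (b : ℕ) :
    Ww (3 :: 1 :: pre b []) = Xop (Xop (Xop (Yop (((Xop * Yop) ^ b) eW)))) := by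
  rw [← Ww_nil, ← Ww_pre]
  simp [Ww, wordOf, Xop_single, Yop_single, List.replicate]

theorem DropD_ones_eq (r : ℕ) : DropD (pre r []) = Ww (pre r []) := by
  rw [DropD_ones, Ww_pre, Ww_nil]

theorem Uf_succ_eq (n : ℕ) (K : List ℕ → M) : Uf (n + 1) K =
    ∑ p ∈ Finset.HasAntidiagonal.antidiagonal n, K (pre p.1 (3 :: 1 :: pre p.2 [])) := by
  induction n generalizing K with
  | zero => simp [Uf, pre]
  | succ n ih => rw [Uf, ih, Finset.Nat.sum_antidiagonal_succ, add_comm]; rfl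

theorem Qf_succ_sum (n : ℕ) (K : List ℕ → M) : Qf (n + 1) K =
    ∑ p ∈ Finset.HasAntidiagonal.antidiagonal n, K (pre p.1 (1 :: 2 :: pre p.2 [])) := by
  induction n generalizing K with
  | zero => simp [Qf, pre]
  | succ n ih => rw [Qf, ih, Finset.Nat.sum_antidiagonal_succ, add_comm]; rfl

theorem Vf_succ_sum (n : ℕ) (K : List ℕ → M) : Vf (n + 1) K =
    ∑ p ∈ Finset.HasAntidiagonal.antidiagonal n, ((p.2 + 1) • K (pre p.1 (2 :: 1 :: pre p.2 [])) +
      (p.1 + 1) • K (pre p.1 (1 :: 2 :: pre p.2 []))) := by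
  induction n generalizing K with
  | zero => simp [Vf, Qf, pre, add_comm]
  | succ n ih =>
    rw [Vf, ih, Finset.Nat.sum_antidiagonal_succ, Qf_succ_sum, add_assoc, add_comm,
      ← Finset.sum_add_distrib]
    congr 1
    · simp [pre, add_comm]
    · refine Finset.sum_congr rfl fun p _ => ?_
      simp only [pre, add_smul, one_smul]
      abel

/-- `𝔇(𝐜)` is the word encoded by `𝐜` for each tuple `𝐜 = (1,1)^a, 3, 1, (1,1)^b`. -/
theorem Uf_DropD (r : ℕ) : Uf r DropD = Uf r Ww := by
  cases r with
  | zero => rfl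
  | succ r =>
    rw [Uf_succ_eq, Uf_succ_eq]
    refine Finset.sum_congr rfl fun p _ => ?_
    rw [DropD_odd_three, Ww_pre, Ww_three]

theorem Vf_DropD_succ (j : ℕ) : Vf (j + 1) DropD = Xop (Yop (Vf j DropD)) +
    (2 * (j + 1)) • Xop (Xop (Yop (Ww (pre j [])))) := by
  have key (n : ℕ) : Vf (n + 1) DropD = 2 • ∑ p ∈ Finset.HasAntidiagonal.antidiagonal n,
      (p.2 + 1) • ((Xop * Yop) ^ p.1) (Xop (Xop (Yop (Ww (pre p.2 []))))) := by
    rw [Vf_succ_sum, Finset.sum_add_distrib, two_smul]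
    congr 1
    · refine Finset.sum_congr rfl fun p _ => ?_
      rw [DropD_odd_two, ← DropD_ones_eq, DropD_ones]
    · rw [← Finset.Nat.sum_antidiagonal_swap]
      refine Finset.sum_congr rfl fun p _ => ?_
      rw [Prod.fst_swap, Prod.snd_swap, DropD_even_two, ← DropD_ones_eq, DropD_ones]
  cases j with
  | zero => rw [key]; simp [Vf]
  | succ j =>
    rw [key, key, Finset.Nat.sum_antidiagonal_succ, smul_add, add_comm]
    congr 1
    · simp only [map_nsmul, map_sum, pow_succ']
      rfl
    · simp [smul_smul]

/-- The recursion for `𝔇`, summed over all tuples of `Tf`, is a triangular system for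
`Σ 𝔇(𝐜)`; its solution is a two-term recurrence in the number of slots. -/
theorem Tf_DropD_succ (j : ℕ) : Tf (j + 1) DropD = Xop (Yop (Tf j DropD)) +
    Xop (Xop (Xop (Yop (Ww (pre j []))))) - (j + 1) • Ww (pre (j + 2) []) := by
  have hZ := Bop_vanish (Z := fun j => Tf (j + 1) DropD - Xop (Vf (j + 1) DropD) +
    ((j + 2).choose 2) • Xop (Xop (Ww (pre (j + 1) []))) +
    (j + 1) • Xop (Yop (Ww (pre (j + 1) []))) - Xop (Yop (Tf j DropD)) +
    Xop (Xop (Yop (Vf j DropD))) - (j.choose 2) • Xop (Xop (Xop (Yop (Ww (pre j [])))))) ?_ j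
  · have hc : (((j + 2).choose 2 : ℕ) : ℤ) = (j.choose 2 : ℕ) + 2 * j + 1 := by
      simp [Nat.choose_succ_succ]; ring
    have e1 : Ww (pre (j + 1) []) = Xop (Yop (Ww (pre j []))) := Ww_one_one _
    have e2 : Ww (pre (j + 2) []) = Xop (Yop (Ww (pre (j + 1) []))) := Ww_one_one _
    simp only [Vf_DropD_succ, map_add, map_nsmul] at hZ
    rw [e2, ← sub_eq_zero, ← hZ, e1, ← natCast_zsmul _ ((j + 2).choose 2), hc]
    module
  · intro n
    have h : Tf (n + 1) (fun c => endSum c (fun n c' => (Xop ^ n) (DropD c'))) =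
        Tf (n + 1) (fun c => slotSum c (fun n c' => XYop n (DropD c')) -
          endSum c (fun n c' => XYop n (DropD c'))) :=
      Tf_congr _ fun a t => DropD_eq _ (by simp)
    rw [Tf_sub, Tf_endSum, Tf_endSum, Tf_slotSum, Bop, ← sub_eq_zero] at h
    simp only [← Bop_add, ← Bop_sub] at h
    rw [← h]
    congr 1; funext i j
    have h0 := XYop_two_mul_add i 0
    have h1 := XYop_two_mul_add i 1
    have h2 := XYop_two_mul_add i 2
    have hT (A : Module.End ℚ Bw) (n : ℕ) : Tf n (fun c => A (DropD c)) = A (Tf n DropD) :=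
      (map_Tf A.toAddMonoidHom n DropD).symm
    have hV (A : Module.End ℚ Bw) (n : ℕ) : Vf n (fun c => A (DropD c)) = A (Vf n DropD) :=
      (map_Vf A.toAddMonoidHom n DropD).symm
    simp only [hT, hV, DropD_ones_eq]
    rw [show 2 * (i + 1) = 2 * i + (0 + 2) by ring, h0,
      show 2 * i + (0 + 2) + 1 = 2 * i + (1 + 2) by ring, h1,
      show 2 * i + (0 + 2) + 2 = 2 * i + (2 + 2) by ring, h2]
    simp [pow_succ, Module.End.mul_apply, Nat.choose_succ_succ, add_smul]
    abel

/-- The value of `𝔇` on the sum of all tuples of `Tf r`, the key computation. -/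
theorem Tf_DropD (r : ℕ) :
    Tf r DropD = Uf r Ww - ((r + 1).choose 2) • Ww (pre (r + 1) []) := by
  induction r with
  | zero => simp [Tf, Uf]
  | succ j ih =>
    have e2 : Ww (pre (j + 2) []) = Xop (Yop (Ww (pre (j + 1) []))) := Ww_one_one _
    have e3 : Xop (Yop (Uf j Ww)) = Uf j (fun c => Ww (1 :: 1 :: c)) := by
      simp only [Ww_one_one]
      exact map_Uf (Xop * Yop).toAddMonoidHom j Ww
    rw [Tf_DropD_succ, ih, Uf, map_sub, map_sub, e3, map_nsmul, map_nsmul, ← e2, Ww_three,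
      Ww_pre j, Ww_nil, Nat.choose_succ_succ (j + 1), add_smul]
    simp only [Nat.choose_one_right, add_smul, one_smul, show j + 1 + 1 = j + 2 from rfl]
    abel

/-! ### The two products with `z₂` -/

theorem wordOf_pre_succ (r : ℕ) :
    wordOf (pre (r + 1) []) = false :: true :: wordOf (pre r []) := by
  simp [pre, wordOf]

theorem shW_nil_right (u : List Bool) : shW u [] = Finsupp.single u 1 := by
  cases u <;> simp [shW]

theorem shW_cons_cons (a b : Bool) (u v : List Bool) : shW (a :: u) (b :: v) =
    Finsupp.mapDomain (a :: ·) (shW u (b :: v)) +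
      Finsupp.mapDomain (b :: ·) (shW (a :: u) v) := by
  rw [shW]

theorem shW_true_cons (u : List Bool) :
    shW (true :: u) [true] = Yop (shW u [true]) + Yop (Yop (Finsupp.single u 1)) := by
  rw [shW_cons_cons, shW_nil_right, Yop_single]; rfl

theorem Qf_succ_Ww (r : ℕ) : Qf (r + 1) Ww =
    Xop (Yop (Qf r Ww)) + Xop (Yop (Yop (Ww (pre r [])))) := by
  have h : Xop (Yop (Qf r Ww)) = Qf r (fun c => Ww (1 :: 1 :: c)) := by
    simp only [Ww_one_one]
    exact map_Qf (Xop * Yop).toAddMonoidHom r Ww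
  rw [Qf, h]
  simp [Ww, wordOf, Xop_single, Yop_single, List.replicate]

theorem Tf_succ_Ww (r : ℕ) : Tf (r + 1) Ww =
    Xop (Yop (Tf r Ww)) + Xop (Xop (Yop (Qf r Ww))) +
      Xop (Xop (Yop (Yop (Ww (pre r []))))) := by
  have h : Xop (Yop (Tf r Ww)) = Tf r (fun c => Ww (1 :: 1 :: c)) := by
    simp only [Ww_one_one]
    exact map_Tf (Xop * Yop).toAddMonoidHom r Ww
  have h' : Xop (Xop (Yop (Qf r Ww))) = Qf r (fun c => Ww (2 :: 1 :: c)) := by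
    have (c : List ℕ) : Ww (2 :: 1 :: c) = Xop (Xop (Yop (Ww c))) := by
      simp [Ww, wordOf, Xop_single, Yop_single, List.replicate]
    simp only [this]
    exact map_Qf (Xop * Xop * Yop).toAddMonoidHom r Ww
  rw [Tf, h, h']
  simp [Ww, wordOf, Xop_single, Yop_single, List.replicate]

/-- `(xy)^r ⧢ y`. -/
theorem shW_true (r : ℕ) :
    shW (wordOf (pre r [])) [true] = Yop (Ww (pre r [])) + 2 • Qf r Ww := by
  induction r with
  | zero => simp [pre, wordOf, shW, Qf, Ww, Yop_single]
  | succ r ih =>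
    have e : Ww (pre (r + 1) []) = Xop (Yop (Ww (pre r []))) := Ww_one_one _
    have h : shW (wordOf (pre (r + 1) [])) [true] =
        Xop (shW (true :: wordOf (pre r [])) [true]) + Yop (Ww (pre (r + 1) [])) := by
      rw [wordOf_pre_succ, shW_cons_cons, shW_nil_right, Ww, wordOf_pre_succ]; rfl
    rw [h, shW_true_cons, ih, Qf_succ_Ww, e, ← Ww]
    simp only [map_add, map_nsmul]
    abel

/-- `(xy)^r ⧢ xy`, that is `z₂^r ⧢ z₂`. -/
theorem shW_false_true (r : ℕ) : shW (wordOf (pre r [])) [false, true] =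
    (r + 1) • Ww (pre (r + 1) []) + 4 • Tf r Ww := by
  induction r with
  | zero => simp [pre, wordOf, shW, Tf, Ww]
  | succ r ih =>
    have e : Ww (pre (r + 1) []) = Xop (Yop (Ww (pre r []))) := Ww_one_one _
    have e' : Ww (pre (r + 1 + 1) []) = Xop (Yop (Ww (pre (r + 1) []))) := Ww_one_one _
    have h : shW (wordOf (pre (r + 1) [])) [false, true] =
        Xop (Yop (shW (wordOf (pre r [])) [false, true]) +
          Xop (shW (true :: wordOf (pre r [])) [true])) +
        Xop (shW (wordOf (pre (r + 1) [])) [true]) := by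
      rw [wordOf_pre_succ, shW_cons_cons, shW_cons_cons true]; rfl
    rw [h, shW_true_cons, ih, shW_true, shW_true, Tf_succ_Ww, Qf_succ_Ww, ← Ww, e', e]
    simp only [map_add, map_nsmul, add_smul, one_smul]
    abel

/-- The linear extension of `fromXY`. -/
def unXY : Bw →ₗ[ℚ] H := Finsupp.lmapDomain ℚ ℚ fromXY

theorem unXY_Ww (c : List ℕ) : unXY (Ww c) = zw (fromXY (wordOf c)) := by
  simp [unXY, Ww, zw]

theorem unXY_XY (v : Bw) : unXY (Xop (Yop v)) = Finsupp.mapDomain (2 :: ·) (unXY v) := by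
  induction v using Finsupp.induction_linear with
  | zero => simp
  | add f g hf hg => simp only [map_add, hf, hg, Finsupp.mapDomain_add]
  | single w q =>
    simp [Yop_single, Xop_single, unXY, fromXY, fromXYAux]

theorem fromXY_wordOf_pre (r : ℕ) : fromXY (wordOf (pre r [])) = List.replicate r 2 := by
  induction r with
  | zero => rfl
  | succ r ih => rw [wordOf_pre_succ, List.replicate_succ, ← ih]; rfl

theorem toXY_replicate (r : ℕ) : toXY (List.replicate r 2) = wordOf (pre r []) := by
  induction r with
  | zero => rfl
  | succ r ih => rw [wordOf_pre_succ, ← ih]; simp [toXY, List.replicate_succ]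

/-- `z₂^r * z₂`. -/
theorem hmulW_replicate (r : ℕ) : hmulW (List.replicate r 2) [2] =
    unXY ((r + 1) • Ww (pre (r + 1) []) + Uf r Ww) := by
  induction r with
  | zero => simp [hmulW, Uf, unXY_Ww, fromXY_wordOf_pre, zw]
  | succ r ih =>
    have e : Ww (pre (r + 1 + 1) []) = Xop (Yop (Ww (pre (r + 1) []))) := Ww_one_one _
    have h : Xop (Yop (Uf r Ww)) = Uf r (fun c => Ww (1 :: 1 :: c)) := by
      simp only [Ww_one_one]
      exact map_Uf (Xop * Yop).toAddMonoidHom r Ww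
    have h4 : unXY (Ww (3 :: 1 :: pre r [])) = zw (4 :: List.replicate r 2) := by
      rw [unXY_Ww, ← fromXY_wordOf_pre]; rfl
    have h0 : hmulW (List.replicate r 2) [] = zw (List.replicate r 2) := by
      cases r <;> simp [hmulW, zw, List.replicate_succ]
    have h1 : hmulW (2 :: List.replicate r 2) [] = zw (2 :: List.replicate r 2) := by
      simp [hmulW, zw]
    have h2 : unXY (Ww (pre (r + 1 + 1) [])) = zw (2 :: 2 :: List.replicate r 2) := by
      rw [unXY_Ww, fromXY_wordOf_pre]; rfl
    rw [List.replicate_succ, hmulW, ih, h0, h1, ← unXY_XY, Uf, ← h]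
    simp only [map_add, map_nsmul, ← e, h2, h4]
    simp only [zw, Finsupp.mapDomain_single, add_smul, one_smul]
    abel

/-! ### From tuples to words of `𝔥⁰` -/

/-- Tuples of even length with positive entries, the exponent tuples of words in `𝔥⁰`. -/
inductive Good : List ℕ → Prop
  | nil : Good []
  | cons (a b : ℕ) (c : List ℕ) : Good c → Good ((a + 1) :: (b + 1) :: c)

theorem Good_pre (r : ℕ) : Good (pre r []) := by
  induction r with
  | zero => exact .nil
  | succ r ih => exact .cons 0 0 _ ih

theorem Qf_congr_good (n : ℕ) {K K' : List ℕ → M} (h : ∀ c, Good c → K c = K' c) :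
    Qf n K = Qf n K' := by
  induction n generalizing K K' with
  | zero => rfl
  | succ n ih =>
    rw [Qf, Qf, h _ (.cons 0 1 _ (Good_pre n)), ih fun c hc => h _ (.cons 0 0 c hc)]

theorem Tf_congr_good (n : ℕ) {K K' : List ℕ → M} (h : ∀ c, Good c → K c = K' c) :
    Tf n K = Tf n K' := by
  induction n generalizing K K' with
  | zero => rfl
  | succ n ih =>
    rw [Tf, Tf, h _ (.cons 1 1 _ (Good_pre n)), ih fun c hc => h _ (.cons 0 0 c hc),
      Qf_congr_good n fun c hc => h _ (.cons 1 0 c hc)]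

theorem Uf_congr_good (n : ℕ) {K K' : List ℕ → M} (h : ∀ c, Good c → K c = K' c) :
    Uf n K = Uf n K' := by
  induction n generalizing K K' with
  | zero => rfl
  | succ n ih =>
    rw [Uf, Uf, h _ (.cons 2 0 _ (Good_pre n)), ih fun c hc => h _ (.cons 0 0 c hc)]

theorem toXY_fromXYAux (w : List Bool) (k : ℕ) :
    toXY (fromXYAux (w ++ [true]) k) = List.replicate k false ++ (w ++ [true]) := by
  induction w generalizing k with
  | nil => simp [fromXYAux, toXY]
  | cons a w ih =>
    cases a
    · simp only [List.cons_append, fromXYAux, ih, List.replicate_succ']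
      simp
    · have h (l : List ℕ) : toXY ((k + 1) :: l) = List.replicate k false ++ true :: toXY l := by
        simp [toXY]
      simp [fromXYAux, h, ih]

theorem wordOf_good {c : List ℕ} (hc : Good c) : wordOf c = [] ∨ ∃ w, wordOf c = w ++ [true] := by
  induction hc with
  | nil => exact .inl rfl
  | cons a b c _ ih =>
    right
    rcases ih with h | ⟨w, h⟩
    · exact ⟨List.replicate (a + 1) false ++ List.replicate b true, by
        simp [wordOf, h, List.replicate_succ']⟩
    · exact ⟨List.replicate (a + 1) false ++ (List.replicate (b + 1) true ++ w), by
        simp [wordOf, h]⟩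

theorem toXY_fromXY_wordOf {c : List ℕ} (hc : Good c) :
    toXY (fromXY (wordOf c)) = wordOf c := by
  rcases wordOf_good hc with h | ⟨w, h⟩
  · rw [h]; rfl
  · rw [h, fromXY, toXY_fromXYAux]; rfl

theorem rle_replicate (a : Bool) (n : ℕ) (w : List Bool) (hw : w.head? ≠ some a) :
    rle (List.replicate (n + 1) a ++ w) = (n + 1) :: rle w := by
  have h : w.takeWhile (· = a) = [] ∧ w.dropWhile (· = a) = w := by
    cases w with
    | nil => simp
    | cons b w =>
      have : b ≠ a := by simpa using hw
      simp [this]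
  rw [List.replicate_succ, List.cons_append, rle,
    List.takeWhile_append_of_pos (by simp), List.dropWhile_append_of_pos (by simp), h.1, h.2]
  simp

theorem rle_wordOf {c : List ℕ} (hc : Good c) : rle (wordOf c) = c := by
  induction hc with
  | nil => simp [wordOf, rle]
  | cons a b c hc ih =>
    rw [wordOf, rle_replicate _ _ _ (by simp [List.replicate_succ]), rle_replicate, ih]
    cases hc <;> simp [wordOf, List.replicate_succ]

theorem Drop1_eq (w : H) : Drop1 w = Finsupp.linearCombination ℚ Drop1W w := rfl

theorem Drop1_unXY {c : List ℕ} (hc : Good c) : Drop1 (unXY (Ww c)) = unXY (DropD c) := by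
  rw [unXY_Ww, Drop1_eq, zw, Finsupp.linearCombination_single, one_smul, Drop1W,
    toXY_fromXY_wordOf hc, rle_wordOf hc]
  rfl

/-- The words of `z₂^{r+1}` cancel between the two products, which leaves the tuples of `Tf` and `Uf`. -/
theorem der_replicate (r : ℕ) : der (zw (List.replicate r 2)) =
    unXY (4 • Tf r DropD - Uf r DropD) := by
  let L : Bw →ₗ[ℚ] H := Finsupp.linearCombination ℚ Drop1W ∘ₗ unXY
  have hL {c : List ℕ} (hc : Good c) : L (Ww c) = unXY (DropD c) := Drop1_unXY hc
  have hs : shmul (zw (List.replicate r 2)) (zw [2]) =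
      unXY (shW (wordOf (pre r [])) [false, true]) := by
    rw [shmul, zw, zw, Finsupp.sum_single_index (by simp), Finsupp.sum_single_index (by simp)]
    simp only [mul_one, one_smul, shmulW, toXY_replicate]
    rfl
  have hh : hmul (zw (List.replicate r 2)) (zw [2]) = hmulW (List.replicate r 2) [2] := by
    rw [hmul, zw, zw, Finsupp.sum_single_index (by simp), Finsupp.sum_single_index (by simp)]
    simp
  have hT : L (Tf r Ww) = unXY (Tf r DropD) := by
    refine (map_Tf L.toAddMonoidHom r Ww).trans ?_
    refine Eq.trans ?_ (map_Tf unXY.toAddMonoidHom r DropD).symm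
    exact Tf_congr_good r fun c hc => hL hc
  have hU : L (Uf r Ww) = unXY (Uf r DropD) := by
    refine (map_Uf L.toAddMonoidHom r Ww).trans ?_
    refine Eq.trans ?_ (map_Uf unXY.toAddMonoidHom r DropD).symm
    exact Uf_congr_good r fun c hc => hL hc
  rw [der, Drop1_eq, hs, hh, hmulW_replicate, shW_false_true, ← map_sub]
  change L _ = _
  rw [add_sub_add_left_eq_sub, map_sub, map_sub, map_nsmul, map_nsmul, hT, hU]

/-- `der(z₂^r) = 3·(z₂^r * z₂) − (r+1)(2r+3)·z₂^{r+1}` for all `r ≥ 1`. -/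
theorem stmt9 (r : ℕ) (hr : 1 ≤ r) :
    der (zw (List.replicate r 2)) =
      (3 : ℚ) • hmul (zw (List.replicate r 2)) (zw [2]) -
      (((r + 1) * (2 * r + 3) : ℕ) : ℚ) • zw (List.replicate (r + 1) 2) := by
  have hh : hmul (zw (List.replicate r 2)) (zw [2]) = hmulW (List.replicate r 2) [2] := by
    rw [hmul, zw, zw, Finsupp.sum_single_index (by simp), Finsupp.sum_single_index (by simp)]
    simp
  have hc : (((r + 1).choose 2 : ℕ) : ℚ) = (r + 1) * r / 2 := by
    rw [Nat.cast_choose_two]; push_cast; ring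
  rw [der_replicate, Tf_DropD, Uf_DropD, hh, hmulW_replicate, ← fromXY_wordOf_pre (r + 1),
    ← unXY_Ww]
  simp only [map_add, map_sub, map_nsmul]
  rw [← Nat.cast_smul_eq_nsmul ℚ ((r + 1).choose 2), hc]
  push_cast
  module
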